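/- arXiv:2603.21267 — 2 statements merged into one kernel-verified Lean document; each statement's English description precedes it below -/
import Mathlib

section
/- Let m, n_1,…,n_m be positive integers, N = n_1 + ⋯ + n_m, and let T be a symmetric positive semidefinite N × N matrix of rank r with diagonal blocks T_{ii} of size n_i × n_i. Suppose Q_i are symmetric n_i × n_i matrices with Q_i ≥ I_{n_i}, T_{ii} ≤ I_{n_i} and (I_{n_i} − T_{ii})(Q_i − I_{n_i}) = 0 for all i, and let P = diag(p_1 I_{n_1},…,p_m I_{n_m}) with p_i > 0. Let μ be the centered Gaussian measure on ℝ^N with covariance T, i.e. the pushforward of γ_r under the linear map z ↦ Uz for an N × r matrix U with U Uᵀ = T. If T ≤ P^{-1}, then for all nonnegative functions f_i on ℝ^{n_i}, integrable with respect to γ_{n_i} and more log-convex than g_{(Q_i − I_{n_i})/(2π)}, writing x ∈ ℝ^N as (x_1,…,x_m) with x_i ∈ ℝ^{n_i}, one has ∫_{ℝ^N} ∏_{i=1}^m f_i(x_i)^{p_i} dμ(x) ≤ ∏_{i=1}^m (∫_{ℝ^{n_i}} f_i dγ_{n_i})^{p_i}. -/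
open MeasureTheory Matrix
open scoped ENNReal

noncomputable section

/-- The centered Gaussian function attached to a matrix `Q` : `g_Q(x) = exp(-π⟨Qx,x⟩)`. -/
def gaussFn {k : ℕ} (Q : Matrix (Fin k) (Fin k) ℝ) (x : Fin k → ℝ) : ℝ :=
  Real.exp (-Real.pi * (Q.mulVec x ⬝ᵥ x))

/-- A nonnegative log-convex function. -/
def LogConvexFun {k : ℕ} (h : (Fin k → ℝ) → ℝ) : Prop :=
  (∀ x, 0 ≤ h x) ∧
    ∀ x y : Fin k → ℝ, ∀ a b : ℝ, 0 ≤ a → 0 ≤ b → a + b = 1 →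
      h (a • x + b • y) ≤ h x ^ a * h y ^ b

/-- `f` is more log-convex than `g_Q`, i.e. `f = g_Q · h` with `h` log-convex. -/
def MoreLogConvex {k : ℕ} (f : (Fin k → ℝ) → ℝ) (Q : Matrix (Fin k) (Fin k) ℝ) : Prop :=
  ∃ h : (Fin k → ℝ) → ℝ, LogConvexFun h ∧ f = fun x => gaussFn Q x * h x

/-- The standard Gaussian probability measure on `ℝ^k`. -/
def stdGaussian (k : ℕ) : Measure (Fin k → ℝ) :=
  volume.withDensity fun x =>
    ENNReal.ofReal ((2 * Real.pi) ^ (-(k : ℝ) / 2) * Real.exp (-(∑ i, x i ^ 2) / 2))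

/-!
First suppose that each marginal map `A i` is a coisometry and that `∑ i, p i • (A i)† ∘ A i ≤ 1`.
Run the heat flow for a small time `ε ^ 2 / 2`, once on the product `∏ i, f i (A i z) ^ p i` and
once on each `f i` separately. To second order in `ε` the two results differ by the Gaussian mean
of a Hessian, which is nonpositive because `‖∑ i, p i • (A i)† ℓ i‖ ^ 2 ≤ ∑ i, p i * ‖ℓ i‖ ^ 2`.
After `n` steps with `ε = 1 / √n` the total error is `O(1 / √n)`, and `n → ∞` gives the inequality.

In general, write `1 - T i i = B i * (B i)ᵀ`, let `A i` be the `i`-th block of rows of `U`, and add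
`n` independent Gaussian vectors `y i l` for every `i`. The maps `A i z ± B i (y i l)` with
exponents `p i / (2 * n)` fall under the first case once `n ≥ max p`. As `Q i - 1` vanishes on the
range of `B i`, the Gaussian factor of `f i` is constant along that range, so that midpoint
log-convexity gives `f i (A i z) ^ 2 ≤ f i (A i z + B i y) * f i (A i z - B i y)`.
-/

open Asymptotics Filter Topology
open scoped InnerProduct

local notation "γ[" E "]" => ProbabilityTheory.stdGaussian E

namespace GaussianBrascampLieb

section Gaussian

variable {E F : Type*} [NormedAddCommGroup E] [InnerProductSpace ℝ E] [FiniteDimensional ℝ E]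
  [MeasurableSpace E] [BorelSpace E]
  [NormedAddCommGroup F] [InnerProductSpace ℝ F] [FiniteDimensional ℝ F]
  [MeasurableSpace F] [BorelSpace F]

lemma measurePreserving_stdGaussian (A : E →L[ℝ] F) (hA : ∀ t, ‖(A†) t‖ = ‖t‖) :
    MeasurePreserving A γ[E] γ[F] where
  measurable := by fun_prop
  map_eq := by
    have := Measure.isProbabilityMeasure_map (μ := γ[E]) A.continuous.aemeasurable
    apply Measure.ext_of_charFun
    ext t
    have hpull : charFun (γ[E].map A) t = charFun γ[E] ((A†) t) := by
      rw [charFun_apply, charFun_apply, integral_map (by fun_prop)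
        (Measurable.aestronglyMeasurable (by fun_prop))]
      simp only [ContinuousLinearMap.adjoint_inner_right]
    rw [hpull, ProbabilityTheory.charFun_stdGaussian, ProbabilityTheory.charFun_stdGaussian, hA]

lemma map_smul_stdGaussian_conv {a b c : ℝ} (h : a ^ 2 + b ^ 2 = c ^ 2) :
    (γ[E].map (a • ·)) ∗ (γ[E].map (b • ·)) = γ[E].map (c • ·) := by
  have (r : ℝ) : IsProbabilityMeasure (γ[E].map (r • ·)) :=
    Measure.isProbabilityMeasure_map (by fun_prop)
  apply Measure.ext_of_charFun
  ext t
  rw [charFun_conv]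
  simp only [charFun_map_smul, ProbabilityTheory.charFun_stdGaussian, ← Complex.exp_add]
  congr 1
  simp only [norm_smul, Complex.ofReal_mul, mul_pow, ← Complex.ofReal_pow, Real.norm_eq_abs,
    sq_abs, ← h]
  push_cast
  ring

lemma integrable_norm_pow_stdGaussian (n : ℕ) : Integrable (fun z => ‖z‖ ^ n) γ[E] := by
  rcases eq_or_ne n 0 with rfl | hn
  · simp
  · simpa using (ProbabilityTheory.IsGaussian.memLp_id γ[E] n (by simp)).integrable_norm_pow hn

lemma integrable_one_add_norm_sq_pow_stdGaussian (n : ℕ) :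
    Integrable (fun z => (1 + ‖z‖ ^ 2) ^ n) γ[E] := by
  simp only [add_comm (1 : ℝ), add_pow, ← pow_mul, one_pow, mul_one]
  exact integrable_finsetSum _ fun k _ => (integrable_norm_pow_stdGaussian (2 * k)).mul_const _

lemma integrable_dual_sq_stdGaussian (ℓ : StrongDual ℝ E) :
    Integrable (fun z => ℓ z ^ 2) γ[E] :=
  (ProbabilityTheory.IsGaussian.memLp_dual γ[E] ℓ 2 (by simp)).integrable_sq

lemma integral_dual_sq_stdGaussian (ℓ : StrongDual ℝ E) : ∫ z, ℓ z ^ 2 ∂γ[E] = ‖ℓ‖ ^ 2 := by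
  rw [← ProbabilityTheory.variance_dual_stdGaussian,
    ProbabilityTheory.variance_of_integral_eq_zero ℓ.continuous.aemeasurable
      (ProbabilityTheory.integral_strongDual_stdGaussian _)]

end Gaussian

section Taylor

lemma log_one_add_le_cubic {t : ℝ} (ht : -1 < t) :
    Real.log (1 + t) ≤ t - t ^ 2 / 2 + t ^ 3 / 3 := by
  let gap : ℝ → ℝ := fun s => s - s ^ 2 / 2 + s ^ 3 / 3 - Real.log (1 + s)
  have hgap (s : ℝ) (hs : -1 < s) : HasDerivAt gap (s ^ 3 / (1 + s)) s := by
    have hne : 1 + s ≠ 0 := by linarith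
    refine ((((hasDerivAt_id s).sub ((hasDerivAt_pow 2 s).div_const 2)).add
      ((hasDerivAt_pow 3 s).div_const 3)).sub
      (((hasDerivAt_id s).const_add 1).log hne)).congr_deriv ?_
    simp only [id_eq, Nat.cast_ofNat, Nat.add_one_sub_one, pow_one]
    field_simp
    ring
  suffices gap 0 ≤ gap t by
    have hzero : gap 0 = 0 := by simp [gap]
    simp only [hzero, gap] at this
    linarith
  rcases le_total 0 t with h | h
  · refine monotoneOn_of_hasDerivWithinAt_nonneg (f' := fun s => s ^ 3 / (1 + s))
      (convex_Icc 0 t)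
      (fun s hs => (hgap s (by linarith [hs.1])).continuousAt.continuousWithinAt)
      (fun s hs => ?_) (fun s hs => ?_) ⟨le_rfl, h⟩ ⟨h, le_rfl⟩ h
    all_goals rw [interior_Icc] at hs
    · exact (hgap s (by linarith [hs.1])).hasDerivWithinAt
    · have := hs.1
      positivity
  · refine antitoneOn_of_hasDerivWithinAt_nonpos (f' := fun s => s ^ 3 / (1 + s))
      (convex_Icc t 0)
      (fun s hs => (hgap s (by linarith [hs.1])).continuousAt.continuousWithinAt)
      (fun s hs => ?_) (fun s hs => ?_) ⟨le_rfl, h⟩ ⟨h, le_rfl⟩ h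
    all_goals rw [interior_Icc] at hs
    · exact (hgap s (by linarith [hs.1])).hasDerivWithinAt
    · exact div_nonpos_of_nonpos_of_nonneg (Odd.pow_nonpos (by decide) hs.2.le)
        (by linarith [hs.1])

lemma exp_le_quadratic_add (s : ℝ) :
    Real.exp s ≤ 1 + s + s ^ 2 / 2 + |s| ^ 3 * Real.exp |s| := by
  have hnorm := Complex.norm_exp_sub_sum_le_norm_mul_exp (s : ℂ) 3
  have hreal : Complex.exp (s : ℂ) - ∑ m ∈ Finset.range 3, (s : ℂ) ^ m / (m.factorial : ℂ)
      = ((Real.exp s - (1 + s + s ^ 2 / 2) : ℝ) : ℂ) := by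
    simp [Finset.sum_range_succ]
  rw [hreal, Complex.norm_real, Complex.norm_real, Real.norm_eq_abs, Real.norm_eq_abs] at hnorm
  linarith [le_abs_self (Real.exp s - (1 + s + s ^ 2 / 2))]

variable {ι : Type*} [Fintype ι]

lemma isBigO_sum_mul_pow (c : ι → ℝ) (k : ℕ) (l : Filter (ι → ℝ)) :
    (fun η : ι → ℝ => ∑ i, c i * η i ^ k) =O[l] fun η => ‖η‖ ^ k := by
  refine IsBigO.fun_sum fun i _ =>
    IsBigO.const_mul_left (.of_bound 1 (.of_forall fun η => ?_)) (c i)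
  rw [norm_pow, norm_pow, norm_norm, one_mul]
  gcongr
  exact norm_le_pi_norm η i

/-- The cubic Taylor polynomial at the origin of `η ↦ log (∏ i, (1 + η i) ^ p i)`. -/
def logTaylor (p η : ι → ℝ) : ℝ :=
  ∑ i, p i * η i - (∑ i, p i * η i ^ 2) / 2 + (∑ i, p i * η i ^ 3) / 3

/-- The Hessian at the origin, as a quadratic form, of `η ↦ ∏ i, (1 + η i) ^ p i`. -/
def powHessian (p η : ι → ℝ) : ℝ := (∑ i, p i * η i) ^ 2 - ∑ i, p i * η i ^ 2

lemma prod_one_add_rpow_le_exp {p : ι → ℝ} (hp : ∀ i, 0 ≤ p i) {η : ι → ℝ}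
    (hη : ∀ i, -1 < η i) :
    ∏ i, (1 + η i) ^ p i ≤ Real.exp (logTaylor p η) := by
  have hpos (i : ι) : 0 < 1 + η i := by linarith [hη i]
  calc ∏ i, (1 + η i) ^ p i
      ≤ ∏ i, Real.exp (p i * (η i - η i ^ 2 / 2 + η i ^ 3 / 3)) := by
        refine Finset.prod_le_prod (fun i _ => Real.rpow_nonneg (hpos i).le _) fun i _ => ?_
        rw [Real.rpow_def_of_pos (hpos i), mul_comm]
        gcongr
        exacts [hp i, log_one_add_le_cubic (hη i)]
    _ = _ := by
        rw [logTaylor, ← Real.exp_sum, Finset.sum_div, Finset.sum_div, ← Finset.sum_sub_distrib,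
          ← Finset.sum_add_distrib]
        congr 1
        exact Finset.sum_congr rfl fun i _ => by ring

lemma isBigO_taylor_remainder (p : ι → ℝ) (R : ℝ) :
    (fun η => 1 + logTaylor p η + logTaylor p η ^ 2 / 2
        + |logTaylor p η| ^ 3 * Real.exp |logTaylor p η|
        - (1 + ∑ i, p i * η i + powHessian p η / 2))
      =O[𝓟 (Metric.closedBall 0 R)] fun η => ‖η‖ ^ 3 := by
  set l := 𝓟 (Metric.closedBall (0 : ι → ℝ) R)
  have hbdd {g : (ι → ℝ) → ℝ} (hg : Continuous g) : g =O[l] fun _ => (1 : ℝ) := by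
    obtain ⟨C, hC⟩ := (isCompact_closedBall (0 : ι → ℝ) R).exists_bound_of_continuousOn
      hg.continuousOn
    exact isBigO_principal.2 ⟨C, fun η hη => by simpa using hC η hη⟩
  have hpow {k m : ℕ} (hkm : k ≤ m) : (fun η : ι → ℝ => ‖η‖ ^ m) =O[l] fun η => ‖η‖ ^ k := by
    obtain ⟨j, rfl⟩ := Nat.exists_eq_add_of_le hkm
    simpa [pow_add] using (isBigO_refl (fun η : ι → ℝ => ‖η‖ ^ k) l).mul
      (hbdd (g := fun η => ‖η‖ ^ j) (by fun_prop))
  have hlin := isBigO_sum_mul_pow p 1 l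
  have hsq := (isBigO_sum_mul_pow p 2 l).const_mul_left (1 / 2)
  have hcube := (isBigO_sum_mul_pow p 3 l).const_mul_left (1 / 3)
  have hdiff : (fun η => logTaylor p η - ∑ i, p i * η i) =O[l] fun η => ‖η‖ ^ 2 :=
    ((hcube.trans (hpow (by norm_num : 2 ≤ 3))).sub hsq).congr_left fun η => by rw [logTaylor]; ring
  have hlog_lin : logTaylor p =O[l] fun η => ‖η‖ ^ 1 :=
    ((hdiff.trans (hpow one_le_two)).add hlin).congr_left fun η => by simp
  have hlog_sq : (fun η => (logTaylor p η - ∑ i, p i * η i) *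
      (logTaylor p η + ∑ i, p i * η i ^ 1)) =O[l] fun η => ‖η‖ ^ 3 := by
    simpa only [← pow_add] using hdiff.mul (hlog_lin.add hlin)
  have hexp : (fun η => |logTaylor p η| ^ 3 * Real.exp |logTaylor p η|) =O[l] fun η => ‖η‖ ^ 3 := by
    have hcont : Continuous fun η => Real.exp |logTaylor p η| := by unfold logTaylor; fun_prop
    simpa only [mul_one, ← pow_mul, one_mul] using (hlog_lin.abs_left.pow 3).mul (hbdd hcont)
  refine ((hcube.add (hlog_sq.const_mul_left (1 / 2))).add hexp).congr_left fun η => ?_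
  simp only [logTaylor, powHessian, pow_one]
  ring

lemma exists_prod_one_add_rpow_le {p : ι → ℝ} (hp : ∀ i, 0 ≤ p i) (R : ℝ) :
    ∃ C, ∀ η : ι → ℝ, (∀ i, -1 < η i) → ‖η‖ ≤ R →
      ∏ i, (1 + η i) ^ p i ≤ 1 + ∑ i, p i * η i + powHessian p η / 2 + C * ‖η‖ ^ 3 := by
  obtain ⟨C, hC⟩ := isBigO_principal.1 (isBigO_taylor_remainder p R)
  refine ⟨C, fun η hη hηR => ?_⟩
  have hrem := (Real.le_norm_self _).trans (hC η (by simpa using hηR))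
  rw [norm_pow, norm_norm] at hrem
  linarith [(prod_one_add_rpow_le_exp hp hη).trans (exp_le_quadratic_add _)]

lemma abs_sum_mul_le {p : ι → ℝ} (hp : ∀ i, 0 ≤ p i) (η : ι → ℝ) :
    |∑ i, p i * η i| ≤ (∑ i, p i) * ‖η‖ := by
  rw [Finset.sum_mul]
  refine (Finset.abs_sum_le_sum_abs _ _).trans (Finset.sum_le_sum fun i _ => ?_)
  rw [abs_mul, abs_of_nonneg (hp i)]
  exact mul_le_mul_of_nonneg_left (norm_le_pi_norm η i) (hp i)

lemma abs_powHessian_sub_le {p : ι → ℝ} (hp : ∀ i, 0 ≤ p i) (η ζ : ι → ℝ) :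
    |powHessian p η - powHessian p ζ| ≤
      ((∑ i, p i) ^ 2 + ∑ i, p i) * (‖η - ζ‖ * ‖η + ζ‖) := by
  have hpolar : powHessian p η - powHessian p ζ =
      (∑ i, p i * (η - ζ) i) * (∑ i, p i * (η + ζ) i) - ∑ i, p i * ((η - ζ) * (η + ζ)) i := by
    simp only [powHessian, Pi.sub_apply, Pi.add_apply, Pi.mul_apply, mul_sub, mul_add,
      Finset.sum_sub_distrib, Finset.sum_add_distrib, pow_two, sub_mul]
    simp only [mul_comm (ζ _) (η _)]
    ring
  have hP : 0 ≤ ∑ i, p i := Finset.sum_nonneg fun i _ => hp i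
  calc |powHessian p η - powHessian p ζ|
      ≤ ((∑ i, p i) * ‖η - ζ‖) * ((∑ i, p i) * ‖η + ζ‖) +
          (∑ i, p i) * (‖η - ζ‖ * ‖η + ζ‖) := by
        rw [hpolar]
        refine (abs_sub _ _).trans (add_le_add ?_ ((abs_sum_mul_le hp _).trans ?_))
        · rw [abs_mul]
          gcongr <;> exact abs_sum_mul_le hp _
        · gcongr
          exact norm_mul_le _ _
    _ = _ := by ring

lemma powHessian_smul (p : ι → ℝ) (c : ℝ) (η : ι → ℝ) :
    powHessian p (c • η) = c ^ 2 * powHessian p η := by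
  simp only [powHessian, Pi.smul_apply, smul_eq_mul, mul_left_comm _ c, mul_pow, ← Finset.mul_sum,
    mul_left_comm _ (c ^ 2)]
  ring

lemma exists_prod_one_add_rpow_le_of_linearization {p : ι → ℝ} (hp : ∀ i, 0 ≤ p i) (R D : ℝ)
    (hD : 0 ≤ D) :
    ∃ C, 0 ≤ C ∧ ∀ (ε θ : ℝ) (η q : ι → ℝ), 0 ≤ ε → ε ≤ 1 → 1 ≤ θ → (∀ i, -1 < η i) →
      ‖η‖ ≤ R → ‖q‖ ≤ D * θ → ‖η - ε • q‖ ≤ D * ε ^ 2 * θ →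
      ∏ i, (1 + η i) ^ p i ≤
        1 + ∑ i, p i * η i + ε ^ 2 / 2 * powHessian p q + C * (ε * θ) ^ 3 := by
  obtain ⟨C, hC⟩ := exists_prod_one_add_rpow_le hp R
  set P := (∑ i, p i) ^ 2 + ∑ i, p i
  have hP : 0 ≤ P := add_nonneg (sq_nonneg _) (Finset.sum_nonneg fun i _ => hp i)
  refine ⟨|C| * (2 * D) ^ 3 + P * (3 * D ^ 2), by positivity,
    fun ε θ η q hε hε1 hθ hη hηR hq hηq => ?_⟩
  have hεq : ‖ε • q‖ ≤ D * (ε * θ) := by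
    rw [norm_smul, Real.norm_of_nonneg hε]
    nlinarith
  have herr : D * ε ^ 2 * θ ≤ D * (ε * θ) := by
    have : D * (ε * θ) * ε ≤ D * (ε * θ) * 1 := by gcongr
    linarith
  have hηn : ‖η‖ ≤ 2 * D * (ε * θ) := by
    linarith [norm_le_insert' η (ε • q)]
  have hcubic : C * ‖η‖ ^ 3 ≤ |C| * (2 * D) ^ 3 * (ε * θ) ^ 3 := by
    rw [mul_assoc, ← mul_pow]
    gcongr
    exact le_abs_self C
  have hhess : powHessian p η ≤ ε ^ 2 * powHessian p q + P * (3 * D ^ 2) * (ε * θ) ^ 3 := by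
    have hdiff := (le_abs_self _).trans (abs_powHessian_sub_le hp η (ε • q))
    have hprod : ‖η - ε • q‖ * ‖η + ε • q‖ ≤ 3 * D ^ 2 * (ε * θ) ^ 3 :=
      calc ‖η - ε • q‖ * ‖η + ε • q‖
          ≤ (D * ε ^ 2 * θ) * (3 * D * (ε * θ)) := by
            gcongr
            linarith [norm_add_le η (ε • q)]
        _ = 3 * D ^ 2 * (ε ^ 3 * θ ^ 2) := by ring
        _ ≤ 3 * D ^ 2 * (ε * θ) ^ 3 := by
            rw [mul_pow]
            gcongr
            norm_num
    rw [powHessian_smul] at hdiff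
    linarith [mul_le_mul_of_nonneg_left hprod hP]
  have : 0 ≤ P * (3 * D ^ 2) * (ε * θ) ^ 3 := by positivity
  linarith [hC η hη hηR]

end Taylor

section Average

variable {E H : Type*} [NormedAddCommGroup E] [InnerProductSpace ℝ E] [FiniteDimensional ℝ E]
  [MeasurableSpace E] [BorelSpace E] [NormedAddCommGroup H] [NormedSpace ℝ H]

/-- The Gaussian average `x ↦ 𝔼 f (x + ε Z)` at scale `ε`, that is, the heat semigroup at time
`ε ^ 2 / 2`. -/
def gaussAverage (ε : ℝ) (f : E → H) (x : E) : H := ∫ w, f (x + ε • w) ∂γ[E]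

variable {f g : E → H} {C : ℝ} (hf : Continuous f) (hC : ∀ x, ‖f x‖ ≤ C)
include hf hC

omit [NormedSpace ℝ H] in
lemma integrable_comp_add_smul (x : E) (ε : ℝ) :
    Integrable (fun w => f (x + ε • w)) γ[E] :=
  .of_bound (hf.comp (by fun_prop)).aestronglyMeasurable C (.of_forall fun _ => hC _)

lemma continuous_gaussAverage (ε : ℝ) : Continuous (gaussAverage ε f) :=
  continuous_of_dominated (fun _ => (hf.comp (by fun_prop)).aestronglyMeasurable)
    (fun _ => .of_forall fun _ => hC _) (integrable_const C)
    (.of_forall fun _ => hf.comp (by fun_prop))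

lemma gaussAverage_gaussAverage {a b c : ℝ} (h : a ^ 2 + b ^ 2 = c ^ 2) :
    gaussAverage a (gaussAverage b f) = gaussAverage c f := by
  have (r : ℝ) : IsProbabilityMeasure (γ[E].map (r • ·)) :=
    Measure.isProbabilityMeasure_map (by fun_prop)
  ext x
  have hshift : Continuous fun y => f (x + y) := by fun_prop
  have hint : Integrable (fun y => f (x + y)) (γ[E].map (c • ·)) :=
    .of_bound hshift.aestronglyMeasurable C (.of_forall fun _ => hC _)
  have hunmap (r : ℝ) (v : E) :
      ∫ y, f (x + (v + y)) ∂γ[E].map (r • ·) = gaussAverage r f (x + v) := by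
    rw [integral_map (by fun_prop) (Continuous.aestronglyMeasurable (by fun_prop))]
    simp only [gaussAverage, add_assoc]
  rw [← map_smul_stdGaussian_conv h] at hint
  calc gaussAverage a (gaussAverage b f) x
      = ∫ v, ∫ y, f (x + (v + y)) ∂γ[E].map (b • ·) ∂γ[E].map (a • ·) := by
        simp only [hunmap]
        have hcont := continuous_gaussAverage hf hC b
        rw [integral_map (by fun_prop) (Continuous.aestronglyMeasurable (by fun_prop))]
        rfl
    _ = gaussAverage c f x := by
        rw [← integral_conv hint, map_smul_stdGaussian_conv h]
        simpa using hunmap c 0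

lemma norm_gaussAverage_sub_le {C' : ℝ} (hg : Continuous g) (hC' : ∀ x, ‖g x‖ ≤ C')
    {ε : ℝ} {x y : E} {B : ℝ} (h : ∀ w, ‖f (x + ε • w) - g (y + ε • w)‖ ≤ B) :
    ‖gaussAverage ε f x - gaussAverage ε g y‖ ≤ B := by
  rw [gaussAverage, gaussAverage, ← integral_sub (integrable_comp_add_smul hf hC x ε)
    (integrable_comp_add_smul hg hC' y ε)]
  simpa using norm_integral_le_of_norm_le_const (μ := γ[E]) (.of_forall h)

end Average

section Tame

open scoped NNReal

variable {δ : ℝ} {K : ℝ≥0}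

/-- The class of test functions on which the heat flow argument is run: values in `[δ, K]`, and
both the function and its derivative are `K`-Lipschitz. -/
structure Tame {E : Type*} [NormedAddCommGroup E] [NormedSpace ℝ E] (δ : ℝ) (K : ℝ≥0)
    (f : E → ℝ) : Prop where
  lower : ∀ x, δ ≤ f x
  upper : ∀ x, f x ≤ K
  differentiable : Differentiable ℝ f
  lipschitz : LipschitzWith K f
  lipschitz_fderiv : LipschitzWith K (fderiv ℝ f)

namespace Tame

section NormedSpace

variable {E : Type*} [NormedAddCommGroup E] [NormedSpace ℝ E] {f : E → ℝ} (hf : Tame δ K f)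
include hf

lemma norm_fderiv_le (x : E) : ‖fderiv ℝ f x‖ ≤ K := norm_fderiv_le_of_lipschitz ℝ hf.lipschitz

lemma nonneg (hδ : 0 ≤ δ) (x : E) : 0 ≤ f x := hδ.trans (hf.lower x)

lemma norm_le (hδ : 0 ≤ δ) (x : E) : ‖f x‖ ≤ K := by
  rw [Real.norm_of_nonneg (hf.nonneg hδ x)]
  exact hf.upper x

lemma one_le_div (hδ : 0 < δ) : 1 ≤ K / δ := (one_le_div₀ hδ).2 ((hf.lower 0).trans (hf.upper 0))

lemma abs_add_sub_sub_fderiv_le (x y : E) :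
    |f (x + y) - f x - fderiv ℝ f x y| ≤ K * ‖y‖ ^ 2 := by
  have hbound : ∀ v ∈ Metric.closedBall x ‖y‖, ‖fderiv ℝ f v - fderiv ℝ f x‖ ≤ K * ‖y‖ := by
    intro v hv
    refine (hf.lipschitz_fderiv.norm_sub_le v x).trans ?_
    gcongr
    rwa [← mem_closedBall_iff_norm]
  have := (convex_closedBall x ‖y‖).norm_image_sub_le_of_norm_fderiv_le'
    (fun v _ => hf.differentiable v) hbound (Metric.mem_closedBall_self (norm_nonneg y))
    (y := x + y) (by simp)
  rw [add_sub_cancel_left, Real.norm_eq_abs] at this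
  linarith

end NormedSpace

variable {E : Type*} [NormedAddCommGroup E] [InnerProductSpace ℝ E] [FiniteDimensional ℝ E]
  [MeasurableSpace E] [BorelSpace E] {f : E → ℝ} (hf : Tame δ K f)
include hf

lemma integrable (hδ : 0 ≤ δ) (x : E) (ε : ℝ) :
    Integrable (fun w => f (x + ε • w)) γ[E] :=
  integrable_comp_add_smul hf.lipschitz.continuous (hf.norm_le hδ) x ε

lemma hasFDerivAt_gaussAverage (hδ : 0 ≤ δ) (ε : ℝ) (x : E) :
    HasFDerivAt (gaussAverage ε f) (gaussAverage ε (fderiv ℝ f) x) x :=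
  hasFDerivAt_integral_of_dominated_of_fderiv_le (bound := fun _ => K)
    (F' := fun y w => fderiv ℝ f (y + ε • w)) univ_mem
    (.of_forall fun y => (hf.integrable hδ y ε).aestronglyMeasurable)
    (hf.integrable hδ x ε)
    (integrable_comp_add_smul hf.lipschitz_fderiv.continuous
      hf.norm_fderiv_le x ε).aestronglyMeasurable
    (.of_forall fun _ _ _ => hf.norm_fderiv_le _) (integrable_const _)
    (.of_forall fun _ _ _ => (hasFDerivAt_comp_add_right _).2 (hf.differentiable _).hasFDerivAt)

lemma average (hδ : 0 ≤ δ) (ε : ℝ) : Tame δ K (gaussAverage ε f) where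
  lower x := by
    simpa [gaussAverage] using integral_mono (integrable_const δ) (hf.integrable hδ x ε)
      fun _ => hf.lower _
  upper x := by
    simpa [gaussAverage] using integral_mono (hf.integrable hδ x ε) (integrable_const (K : ℝ))
      fun _ => hf.upper _
  differentiable x := (hf.hasFDerivAt_gaussAverage hδ ε x).differentiableAt
  lipschitz := by
    have hc := hf.lipschitz.continuous
    refine .of_dist_le_mul fun x y => ?_
    rw [dist_eq_norm, dist_eq_norm]
    refine norm_gaussAverage_sub_le hc (hf.norm_le hδ) hc (hf.norm_le hδ) fun w => ?_
    simpa using hf.lipschitz.norm_sub_le (x + ε • w) (y + ε • w)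
  lipschitz_fderiv := by
    have hc := hf.lipschitz_fderiv.continuous
    refine .of_dist_le_mul fun x y => ?_
    rw [dist_eq_norm, dist_eq_norm, (hf.hasFDerivAt_gaussAverage hδ ε x).fderiv,
      (hf.hasFDerivAt_gaussAverage hδ ε y).fderiv]
    refine norm_gaussAverage_sub_le hc hf.norm_fderiv_le hc hf.norm_fderiv_le fun w => ?_
    simpa using hf.lipschitz_fderiv.norm_sub_le (x + ε • w) (y + ε • w)

lemma abs_sub_gaussAverage_sub_fderiv_le (hδ : 0 ≤ δ) (ε : ℝ) (x y : E) :
    |f (x + ε • y) - gaussAverage ε f x - ε * fderiv ℝ f x y| ≤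
      K * ε ^ 2 * (‖y‖ ^ 2 + ∫ w, ‖w‖ ^ 2 ∂γ[E]) := by
  have hlocal (w : E) :
      |f (x + ε • w) - f x - ε * fderiv ℝ f x w| ≤ K * ε ^ 2 * ‖w‖ ^ 2 := by
    simpa [norm_smul, mul_pow, mul_assoc] using hf.abs_add_sub_sub_fderiv_le x (ε • w)
  have hmean : |gaussAverage ε f x - f x| ≤
      K * ε ^ 2 * ∫ w, ‖w‖ ^ 2 ∂γ[E] := by
    have hintf := hf.integrable hδ x ε
    have hsub : Integrable (fun w => f (x + ε • w) - f x) γ[E] := hintf.sub (integrable_const _)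
    have hlin := (ProbabilityTheory.IsGaussian.integrable_dual γ[E] (fderiv ℝ f x)).const_mul ε
    have hcentered : gaussAverage ε f x - f x
        = ∫ w, (f (x + ε • w) - f x - ε * fderiv ℝ f x w) ∂γ[E] := by
      rw [integral_sub hsub hlin,
        integral_sub hintf (integrable_const _), integral_const_mul,
        ProbabilityTheory.integral_strongDual_stdGaussian]
      simp [gaussAverage]
    rw [hcentered, ← integral_const_mul, ← Real.norm_eq_abs]
    exact norm_integral_le_of_norm_le ((integrable_norm_pow_stdGaussian 2).const_mul _)
      (.of_forall hlocal)
  calc |f (x + ε • y) - gaussAverage ε f x - ε * fderiv ℝ f x y|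
      = |(f (x + ε • y) - f x - ε * fderiv ℝ f x y)
          - (gaussAverage ε f x - f x)| := by congr 1; ring
    _ ≤ K * ε ^ 2 * ‖y‖ ^ 2 + K * ε ^ 2 * ∫ w, ‖w‖ ^ 2 ∂γ[E] :=
        (abs_sub _ _).trans (add_le_add (hlocal y) hmean)
    _ = _ := by ring

end Tame

end Tame

section SmallStep

open scoped NNReal

namespace Tame

variable {E : Type*} [NormedAddCommGroup E] [InnerProductSpace ℝ E] [FiniteDimensional ℝ E]
  [MeasurableSpace E] [BorelSpace E] {δ : ℝ} {K : ℝ≥0} {f : E → ℝ} (hf : Tame δ K f) (hδ : 0 < δ)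
include hf hδ

lemma gaussAverage_pos (ε : ℝ) (x : E) : 0 < gaussAverage ε f x :=
  hδ.trans_le ((hf.average hδ.le ε).lower x)

lemma neg_one_lt_relative (ε : ℝ) (x y : E) : -1 < f y / gaussAverage ε f x - 1 := by
  have := div_pos (hδ.trans_le (hf.lower y)) (hf.gaussAverage_pos hδ ε x)
  linarith

lemma abs_relative_le (ε : ℝ) (x y : E) : |f y / gaussAverage ε f x - 1| ≤ K / δ := by
  have hquot : f y / gaussAverage ε f x ≤ K / δ :=
    div_le_div₀ K.2 (hf.upper y) hδ ((hf.average hδ.le ε).lower x)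
  have := hf.neg_one_lt_relative hδ ε x y
  have := hf.one_le_div hδ
  rw [abs_le]
  constructor <;> linarith

lemma norm_inv_smul_fderiv_le (ε : ℝ) (x : E) :
    ‖(gaussAverage ε f x)⁻¹ • fderiv ℝ f x‖ ≤ K / δ := by
  rw [norm_smul, norm_inv, Real.norm_of_nonneg (hf.gaussAverage_pos hδ ε x).le, inv_mul_eq_div]
  exact div_le_div₀ K.2 (hf.norm_fderiv_le x) hδ ((hf.average hδ.le ε).lower x)

lemma abs_relative_sub_fderiv_le (ε : ℝ) (x y : E) :
    |f (x + ε • y) / gaussAverage ε f x - 1 - ε * ((gaussAverage ε f x)⁻¹ • fderiv ℝ f x) y| ≤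
      K / δ * ε ^ 2 * (‖y‖ ^ 2 + ∫ w, ‖w‖ ^ 2 ∂γ[E]) := by
  have hpos := hf.gaussAverage_pos hδ ε x
  calc |f (x + ε • y) / gaussAverage ε f x - 1
        - ε * ((gaussAverage ε f x)⁻¹ • fderiv ℝ f x) y|
      = |f (x + ε • y) - gaussAverage ε f x - ε * fderiv ℝ f x y| / gaussAverage ε f x := by
        rw [← abs_of_pos hpos, ← abs_div, abs_of_pos hpos]
        congr 1
        simp only [_root_.smul_apply, smul_eq_mul]
        field_simp
    _ ≤ K * ε ^ 2 * (‖y‖ ^ 2 + ∫ w, ‖w‖ ^ 2 ∂γ[E]) / δ :=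
        div_le_div₀ (by positivity) (hf.abs_sub_gaussAverage_sub_fderiv_le hδ.le ε x y) hδ
          ((hf.average hδ.le ε).lower x)
    _ = _ := by ring

lemma integrable_relative (ε : ℝ) (x : E) :
    Integrable (fun w => f (x + ε • w) / gaussAverage ε f x - 1) γ[E] :=
  ((hf.integrable hδ.le x ε).div_const _).sub (integrable_const 1)

lemma integral_relative (ε : ℝ) (x : E) :
    ∫ w, (f (x + ε • w) / gaussAverage ε f x - 1) ∂γ[E] = 0 := by
  rw [integral_sub ((hf.integrable hδ.le x ε).div_const _) (integrable_const 1), integral_div,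
    ← gaussAverage, div_self (hf.gaussAverage_pos hδ ε x).ne']
  simp

end Tame

section Datum

variable {ι : Type*} [Fintype ι] {E : Type*} [NormedAddCommGroup E] [InnerProductSpace ℝ E]
  [CompleteSpace E] {G : ι → Type*} [∀ i, NormedAddCommGroup (G i)]
  [∀ i, InnerProductSpace ℝ (G i)] [∀ i, CompleteSpace (G i)] {A : ∀ i, E →L[ℝ] G i} {p : ι → ℝ}

variable (A p) in
/-- Brascamp–Lieb data for which the marginals `A i` of a standard Gaussian vector are themselves
standard Gaussian: each `A i` is a coisometry, and `∑ i, p i • (A i)† ∘ A i ≤ 1`. -/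
structure CoisometricDatum : Prop where
  norm_adjoint : ∀ i t, ‖((A i)†) t‖ = ‖t‖
  nonneg : ∀ i, 0 ≤ p i
  sum_le : ∀ z, ∑ i, p i * ‖A i z‖ ^ 2 ≤ ‖z‖ ^ 2

namespace CoisometricDatum

variable (hA : CoisometricDatum A p)
include hA

lemma norm_apply_le (i : ι) (z : E) : ‖A i z‖ ≤ ‖z‖ := by
  have hnorm : ‖A i‖ ≤ 1 := by
    rw [← ContinuousLinearMap.adjoint.norm_map (A i)]
    exact ContinuousLinearMap.opNorm_le_bound _ zero_le_one fun t => by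
      rw [hA.norm_adjoint, one_mul]
  simpa using (A i).le_of_opNorm_le hnorm z

lemma norm_sum_smul_comp_sq_le (ℓ : ∀ i, StrongDual ℝ (G i)) :
    ‖∑ i, p i • (ℓ i ∘L A i)‖ ^ 2 ≤ ∑ i, p i * ‖ℓ i‖ ^ 2 := by
  have hnonneg : 0 ≤ ∑ i, p i * ‖ℓ i‖ ^ 2 :=
    Finset.sum_nonneg fun i _ => mul_nonneg (hA.nonneg i) (sq_nonneg _)
  rw [← Real.le_sqrt (norm_nonneg _) hnonneg]
  refine ContinuousLinearMap.opNorm_le_bound _ (Real.sqrt_nonneg _) fun z => ?_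
  rw [← Real.sqrt_sq (norm_nonneg z), ← Real.sqrt_mul hnonneg]
  apply Real.abs_le_sqrt
  calc ((∑ i, p i • (ℓ i ∘L A i)) z) ^ 2
      = (∑ i, p i * ℓ i (A i z)) ^ 2 := by simp
    _ ≤ (∑ i, p i * ‖ℓ i‖ ^ 2) * ∑ i, p i * ‖A i z‖ ^ 2 := by
        refine Finset.sum_sq_le_sum_mul_sum_of_sq_le_mul _
          (fun i _ => mul_nonneg (hA.nonneg i) (sq_nonneg _))
          (fun i _ => mul_nonneg (hA.nonneg i) (sq_nonneg _)) fun i _ => ?_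
        have := (sq_le_sq₀ (abs_nonneg _) (by positivity)).2 ((ℓ i).le_opNorm (A i z))
        rw [Real.norm_eq_abs, sq_abs, mul_pow] at this
        calc (p i * ℓ i (A i z)) ^ 2 = p i ^ 2 * ℓ i (A i z) ^ 2 := mul_pow ..
          _ ≤ p i ^ 2 * (‖ℓ i‖ ^ 2 * ‖A i z‖ ^ 2) := by gcongr
          _ = _ := by ring
    _ ≤ (∑ i, p i * ‖ℓ i‖ ^ 2) * ‖z‖ ^ 2 := by
        gcongr
        exact hA.sum_le z

end CoisometricDatum

end Datum

variable {ι : Type*} [Fintype ι] {E : Type*} [NormedAddCommGroup E] [InnerProductSpace ℝ E]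
  [FiniteDimensional ℝ E] [MeasurableSpace E] [BorelSpace E] {p : ι → ℝ}

variable (p) in
lemma integrable_powHessian_dual (ℓ : ι → StrongDual ℝ E) :
    Integrable (fun z => powHessian p fun i => ℓ i z) γ[E] := by
  refine Integrable.sub ?_ (integrable_finsetSum _ fun i _ =>
    (integrable_dual_sq_stdGaussian (ℓ i)).const_mul (p i))
  simpa using integrable_dual_sq_stdGaussian (∑ i, p i • ℓ i)

variable {G : ι → Type*} [∀ i, NormedAddCommGroup (G i)] [∀ i, InnerProductSpace ℝ (G i)]
  [∀ i, FiniteDimensional ℝ (G i)] [∀ i, MeasurableSpace (G i)] [∀ i, BorelSpace (G i)]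
  {A : ∀ i, E →L[ℝ] G i}

namespace CoisometricDatum

variable (hA : CoisometricDatum A p)
include hA

lemma integral_comp (i : ι) {g : G i → ℝ} (hg : Continuous g) :
    ∫ z, g (A i z) ∂γ[E] = ∫ w, g w ∂γ[G i] := by
  rw [← (measurePreserving_stdGaussian (A i) (hA.norm_adjoint i)).map_eq,
    integral_map (by fun_prop) hg.aestronglyMeasurable]

lemma integral_norm_sq_le (i : ι) : ∫ w, ‖w‖ ^ 2 ∂γ[G i] ≤ ∫ z, ‖z‖ ^ 2 ∂γ[E] := by
  rw [← hA.integral_comp i (by fun_prop)]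
  exact integral_mono_of_nonneg (.of_forall fun z => by positivity)
    (integrable_norm_pow_stdGaussian 2)
    (.of_forall fun z => pow_le_pow_left₀ (norm_nonneg _) (hA.norm_apply_le i z) 2)

-- The infinitesimal form of the Brascamp–Lieb inequality.
lemma integral_powHessian_nonpos (ℓ : ∀ i, StrongDual ℝ (G i)) :
    ∫ z, powHessian p (fun i => ℓ i (A i z)) ∂γ[E] ≤ 0 := by
  have hsum := integral_dual_sq_stdGaussian (∑ i, p i • (ℓ i ∘L A i))
  have hint := integrable_dual_sq_stdGaussian (∑ i, p i • (ℓ i ∘L A i))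
  simp only [_root_.sum_apply, _root_.smul_apply, ContinuousLinearMap.comp_apply,
    smul_eq_mul] at hsum hint
  have hint_sq (i : ι) : Integrable (fun z => p i * ℓ i (A i z) ^ 2) γ[E] :=
    (integrable_dual_sq_stdGaussian (ℓ i ∘L A i)).const_mul (p i)
  have hterm (i : ι) : ∫ z, p i * ℓ i (A i z) ^ 2 ∂γ[E] = p i * ‖ℓ i‖ ^ 2 := by
    rw [integral_const_mul, hA.integral_comp i (g := fun w => ℓ i w ^ 2) (by fun_prop),
      integral_dual_sq_stdGaussian]
  simp only [powHessian]
  rw [integral_sub hint (integrable_finsetSum _ fun i _ => hint_sq i), hsum,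
    integral_finsetSum _ fun i _ => hint_sq i]
  simp only [hterm]
  exact sub_nonpos.2 (hA.norm_sum_smul_comp_sq_le ℓ)

lemma exists_prod_relative_le {δ : ℝ} (hδ : 0 < δ) (K : ℝ≥0) :
    ∃ C, 0 ≤ C ∧ ∀ f : ∀ i, G i → ℝ, (∀ i, Tame δ K (f i)) →
      ∀ ε, 0 ≤ ε → ε ≤ 1 → ∀ (x : ∀ i, G i) (z : E),
      ∏ i, (f i (x i + ε • A i z) / gaussAverage ε (f i) (x i)) ^ p i ≤
        1 + ∑ i, p i * (f i (x i + ε • A i z) / gaussAverage ε (f i) (x i) - 1)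
          + ε ^ 2 / 2 * powHessian p (fun i =>
              ((gaussAverage ε (f i) (x i))⁻¹ • fderiv ℝ (f i) (x i)) (A i z))
          + C * (ε * (1 + ‖z‖ ^ 2)) ^ 3 := by
  set m₂ := ∫ z, ‖z‖ ^ 2 ∂γ[E]
  have hm₂ : 0 ≤ m₂ := integral_nonneg fun z => by positivity
  have hKδ : 0 ≤ K / δ := by positivity
  obtain ⟨C, hC, hprod⟩ := exists_prod_one_add_rpow_le_of_linearization hA.nonneg (K / δ)
    (K / δ * (1 + m₂)) (by positivity)
  refine ⟨C, hC, fun f hf ε hε hε1 x z => ?_⟩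
  set η : ι → ℝ := fun i => f i (x i + ε • A i z) / gaussAverage ε (f i) (x i) - 1
  have hθ : 1 ≤ 1 + ‖z‖ ^ 2 := by linarith [sq_nonneg ‖z‖]
  have hθm : 0 ≤ m₂ * ‖z‖ ^ 2 := by positivity
  have hη : ∏ i, (f i (x i + ε • A i z) / gaussAverage ε (f i) (x i)) ^ p i =
      ∏ i, (1 + η i) ^ p i := by simp [η]
  rw [hη]
  refine hprod ε (1 + ‖z‖ ^ 2) η _ hε hε1 hθ
    (fun i => (hf i).neg_one_lt_relative hδ ε _ _)
    ((pi_norm_le_iff_of_nonneg hKδ).2 fun i => (hf i).abs_relative_le hδ ε _ _)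
    ((pi_norm_le_iff_of_nonneg (by positivity)).2 fun i => ?_)
    ((pi_norm_le_iff_of_nonneg (by positivity)).2 fun i => ?_)
  · calc _ ≤ K / δ * ‖z‖ := ContinuousLinearMap.le_of_opNorm_le_of_le _
          ((hf i).norm_inv_smul_fderiv_le hδ ε (x i)) (hA.norm_apply_le i z)
      _ ≤ K / δ * ((1 + m₂) * (1 + ‖z‖ ^ 2)) := by
          gcongr
          nlinarith [sq_nonneg (‖z‖ - 1)]
      _ = _ := by ring
  · calc _ ≤ K / δ * ε ^ 2 * (‖A i z‖ ^ 2 + ∫ w, ‖w‖ ^ 2 ∂γ[G i]) :=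
          (hf i).abs_relative_sub_fderiv_le hδ ε (x i) (A i z)
      _ ≤ K / δ * ε ^ 2 * ((1 + m₂) * (1 + ‖z‖ ^ 2)) := by
          gcongr
          have := pow_le_pow_left₀ (norm_nonneg _) (hA.norm_apply_le i z) 2
          linarith [hA.integral_norm_sq_le i]
      _ = _ := by ring

lemma exists_integral_prod_relative_le {δ : ℝ} (hδ : 0 < δ) (K : ℝ≥0) :
    ∃ C, 0 ≤ C ∧ ∀ f : ∀ i, G i → ℝ, (∀ i, Tame δ K (f i)) →
      ∀ ε, 0 ≤ ε → ε ≤ 1 → ∀ x : ∀ i, G i,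
      ∫ z, ∏ i, (f i (x i + ε • A i z) / gaussAverage ε (f i) (x i)) ^ p i ∂γ[E] ≤
        1 + C * ε ^ 3 := by
  obtain ⟨C, hC, hpointwise⟩ := hA.exists_prod_relative_le hδ K
  refine ⟨C * ∫ z, (1 + ‖z‖ ^ 2) ^ 3 ∂γ[E],
    mul_nonneg hC (integral_nonneg fun z => by positivity), fun f hf ε hε hε1 x => ?_⟩
  have hpos (i : ι) := (hf i).gaussAverage_pos hδ ε (x i)
  have hint (i : ι) : Integrable (fun z =>
      p i * (f i (x i + ε • A i z) / gaussAverage ε (f i) (x i) - 1)) γ[E] :=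
    ((measurePreserving_stdGaussian (A i) (hA.norm_adjoint i)).integrable_comp_of_integrable
      ((hf i).integrable_relative hδ ε (x i))).const_mul _
  have hmean (i : ι) :
      ∫ z, p i * (f i (x i + ε • A i z) / gaussAverage ε (f i) (x i) - 1) ∂γ[E] = 0 := by
    have hcont := (hf i).lipschitz.continuous
    rw [integral_const_mul, hA.integral_comp i
      (g := fun w => f i (x i + ε • w) / gaussAverage ε (f i) (x i) - 1) (by fun_prop),
      (hf i).integral_relative hδ, mul_zero]
  have hlin := (integrable_const (1 : ℝ)).add (integrable_finsetSum Finset.univ fun i _ => hint i)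
  have hquad := (integrable_powHessian_dual p fun i =>
    ((gaussAverage ε (f i) (x i))⁻¹ • fderiv ℝ (f i) (x i)) ∘L A i).const_mul (ε ^ 2 / 2)
  have hrem := ((integrable_one_add_norm_sq_pow_stdGaussian (E := E) 3).const_mul (ε ^ 3)).const_mul
    C
  have hle := integral_mono_of_nonneg (.of_forall fun z => Finset.prod_nonneg fun i _ =>
    Real.rpow_nonneg (div_nonneg ((hf i).nonneg hδ.le _) (hpos i).le) _)
    ((hlin.add hquad).add hrem) (.of_forall fun z =>
      (hpointwise f hf ε hε hε1 x z).trans_eq (by rw [mul_pow]; rfl))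
  rw [integral_add' (hlin.add hquad) hrem, integral_add' hlin hquad,
    integral_add' (integrable_const _) (integrable_finsetSum _ fun i _ => hint i),
    integral_finsetSum _ fun i _ => hint i, integral_const_mul (ε ^ 2 / 2), integral_const_mul C,
    integral_const_mul (ε ^ 3)] at hle
  have hhess := mul_nonpos_of_nonneg_of_nonpos (by positivity : 0 ≤ ε ^ 2 / 2)
    (hA.integral_powHessian_nonpos fun i => (gaussAverage ε (f i) (x i))⁻¹ • fderiv ℝ (f i) (x i))
  simp only [hmean, integral_const, probReal_univ, smul_eq_mul, Finset.sum_const_zero] at hle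
  simp only [ContinuousLinearMap.comp_apply] at hle
  linarith

end CoisometricDatum

end SmallStep

section Flow

open scoped NNReal

variable {ι : Type*} [Fintype ι] {E : Type*} [NormedAddCommGroup E] [InnerProductSpace ℝ E]
  {G : ι → Type*} [∀ i, NormedAddCommGroup (G i)] [∀ i, InnerProductSpace ℝ (G i)]

/-- The Brascamp–Lieb integrand `z ↦ ∏ i, f i (A i z) ^ p i`. -/
def prodRpow (A : ∀ i, E →L[ℝ] G i) (p : ι → ℝ) (f : ∀ i, G i → ℝ) (z : E) : ℝ :=
  ∏ i, f i (A i z) ^ p i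

variable {A : ∀ i, E →L[ℝ] G i} {p : ι → ℝ} {f : ∀ i, G i → ℝ}

lemma prodRpow_nonneg (hf : ∀ i x, 0 ≤ f i x) (z : E) : 0 ≤ prodRpow A p f z :=
  Finset.prod_nonneg fun i _ => Real.rpow_nonneg (hf i _) _

variable {δ : ℝ} {K : ℝ≥0}

namespace Tame

variable (hδ : 0 < δ) (hf : ∀ i, Tame δ K (f i))
include hδ hf

lemma continuous_prodRpow : Continuous (prodRpow A p f) :=
  continuous_finsetProd _ fun i _ => ((hf i).lipschitz.continuous.comp (A i).continuous).rpow_const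
    fun _ => .inl (hδ.trans_le ((hf i).lower _)).ne'

lemma norm_prodRpow_le (hp : ∀ i, 0 ≤ p i) (z : E) :
    ‖prodRpow A p f z‖ ≤ ∏ i, (K : ℝ) ^ p i := by
  rw [Real.norm_of_nonneg (prodRpow_nonneg (fun i => (hf i).nonneg hδ.le) z)]
  exact Finset.prod_le_prod (fun i _ => Real.rpow_nonneg ((hf i).nonneg hδ.le _) _)
    fun i _ => Real.rpow_le_rpow ((hf i).nonneg hδ.le _) ((hf i).upper _) (hp i)

end Tame

variable [FiniteDimensional ℝ E] [MeasurableSpace E] [BorelSpace E] [∀ i, FiniteDimensional ℝ (G i)]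
  [∀ i, MeasurableSpace (G i)] [∀ i, BorelSpace (G i)]

lemma CoisometricDatum.exists_gaussAverage_prodRpow_le (hA : CoisometricDatum A p) (hδ : 0 < δ)
    (K : ℝ≥0) :
    ∃ C, 0 ≤ C ∧ ∀ f : ∀ i, G i → ℝ, (∀ i, Tame δ K (f i)) → ∀ ε, 0 ≤ ε → ε ≤ 1 → ∀ z,
      gaussAverage ε (prodRpow A p f) z ≤
        (1 + C * ε ^ 3) * prodRpow A p (fun i => gaussAverage ε (f i)) z := by
  obtain ⟨C, hC, hrelative⟩ := hA.exists_integral_prod_relative_le hδ K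
  refine ⟨C, hC, fun f hf ε hε hε1 z => ?_⟩
  set a : ι → ℝ := fun i => gaussAverage ε (f i) (A i z)
  have ha (i : ι) : 0 < a i := (hf i).gaussAverage_pos hδ ε (A i z)
  have hfactor (w : E) : prodRpow A p f (z + ε • w) =
      (∏ i, a i ^ p i) * ∏ i, (f i (A i z + ε • A i w) / a i) ^ p i := by
    rw [← Finset.prod_mul_distrib]
    refine Finset.prod_congr rfl fun i _ => ?_
    rw [map_add, map_smul, Real.div_rpow ((hf i).nonneg hδ.le _) (ha i).le,
      mul_div_cancel₀ _ (Real.rpow_pos_of_pos (ha i) _).ne']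
  calc gaussAverage ε (prodRpow A p f) z
      = (∏ i, a i ^ p i) * ∫ w, ∏ i, (f i (A i z + ε • A i w) / a i) ^ p i ∂γ[E] := by
        simp only [gaussAverage, hfactor, integral_const_mul]
    _ ≤ (∏ i, a i ^ p i) * (1 + C * ε ^ 3) := by
        gcongr
        · exact Finset.prod_nonneg fun i _ => Real.rpow_nonneg (ha i).le _
        · exact hrelative f hf ε hε hε1 fun i => A i z
    _ = _ := mul_comm _ _

lemma gaussAverage_prodRpow_le_pow (hp : ∀ i, 0 ≤ p i) (hδ : 0 < δ) {ε c : ℝ} (hc : 0 ≤ c)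
    (hstep : ∀ f : ∀ i, G i → ℝ, (∀ i, Tame δ K (f i)) → ∀ z,
      gaussAverage ε (prodRpow A p f) z ≤ c * prodRpow A p (fun i => gaussAverage ε (f i)) z)
    (n : ℕ) {f : ∀ i, G i → ℝ} (hf : ∀ i, Tame δ K (f i)) (z : E) :
    gaussAverage (√n * ε) (prodRpow A p f) z ≤
      c ^ n * prodRpow A p (fun i => gaussAverage (√n * ε) (f i)) z := by
  induction n generalizing f with
  | zero => simp [gaussAverage, prodRpow]
  | succ n ih =>
    have hsq : (√n * ε) ^ 2 + ε ^ 2 = (√(n + 1 : ℕ) * ε) ^ 2 := by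
      rw [mul_pow, mul_pow, Real.sq_sqrt (by positivity), Real.sq_sqrt (by positivity)]
      push_cast
      ring
    have hav (i : ι) : Tame δ K (gaussAverage ε (f i)) := (hf i).average hδ.le ε
    have hcont {g : ∀ i, G i → ℝ} (hg : ∀ i, Tame δ K (g i)) : Continuous (prodRpow A p g) :=
      Tame.continuous_prodRpow hδ hg
    calc gaussAverage (√(n + 1 : ℕ) * ε) (prodRpow A p f) z
        = gaussAverage (√n * ε) (gaussAverage ε (prodRpow A p f)) z := by
          rw [gaussAverage_gaussAverage (hcont hf) (Tame.norm_prodRpow_le hδ hf hp) hsq]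
      _ ≤ ∫ w, c * prodRpow A p (fun i => gaussAverage ε (f i)) (z + (√n * ε) • w) ∂γ[E] :=
          integral_mono_of_nonneg
            (.of_forall fun w => integral_nonneg fun v =>
              prodRpow_nonneg (fun i => (hf i).nonneg hδ.le) _)
            ((integrable_comp_add_smul (hcont hav) (Tame.norm_prodRpow_le hδ hav hp) z _).const_mul
              c)
            (.of_forall fun w => hstep f hf _)
      _ = c * gaussAverage (√n * ε) (prodRpow A p fun i => gaussAverage ε (f i)) z :=
          integral_const_mul _ _
      _ ≤ c * (c ^ n * prodRpow A p
            (fun i => gaussAverage (√n * ε) (gaussAverage ε (f i))) z) := by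
          gcongr
          exact ih hav
      _ = c ^ (n + 1) * prodRpow A p (fun i => gaussAverage (√(n + 1 : ℕ) * ε) (f i)) z := by
          simp only [gaussAverage_gaussAverage (hf _).lipschitz.continuous
            ((hf _).norm_le hδ.le) hsq]
          ring

-- `n` steps of size `1 / √n` cost a factor `(1 + C / n ^ (3 / 2)) ^ n ≤ exp (C / √n) → 1`.
lemma CoisometricDatum.integral_prodRpow_le (hA : CoisometricDatum A p) (hδ : 0 < δ)
    (hf : ∀ i, Tame δ K (f i)) :
    ∫ z, prodRpow A p f z ∂γ[E] ≤ ∏ i, (∫ w, f i w ∂γ[G i]) ^ p i := by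
  obtain ⟨C, hC, hstep⟩ := hA.exists_gaussAverage_prodRpow_le hδ K
  set J := ∏ i, (∫ w, f i w ∂γ[G i]) ^ p i
  have hJ : 0 ≤ J := Finset.prod_nonneg fun i _ =>
    Real.rpow_nonneg (integral_nonneg fun w => (hf i).nonneg hδ.le w) _
  have hbound (n : ℕ) (hn : 0 < n) :
      ∫ z, prodRpow A p f z ∂γ[E] ≤ Real.exp (C * (√n)⁻¹) * J := by
    have hroot : √n * (√n)⁻¹ = 1 := mul_inv_cancel₀ (by positivity)
    have hiter := gaussAverage_prodRpow_le_pow hA.nonneg hδ (by positivity)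
      (fun f hf => hstep f hf (√n)⁻¹ (by positivity)
        (inv_le_one_of_one_le₀ (Real.one_le_sqrt.2 (by exact_mod_cast hn)))) n hf (0 : E)
    rw [hroot] at hiter
    simp only [gaussAverage, prodRpow, zero_add, one_smul, map_zero] at hiter
    refine hiter.trans (mul_le_mul_of_nonneg_right ?_ hJ)
    calc (1 + C * (√n)⁻¹ ^ 3) ^ n
        ≤ Real.exp (C * (√n)⁻¹ ^ 3) ^ n := by
          gcongr
          linarith [Real.add_one_le_exp (C * (√n)⁻¹ ^ 3)]
      _ = Real.exp (C * (√n)⁻¹) := by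
          rw [← Real.exp_nat_mul]
          have hsq : (n : ℝ) * (√n)⁻¹ ^ 2 = 1 := by
            rw [inv_pow, Real.sq_sqrt n.cast_nonneg, mul_inv_cancel₀ (by positivity)]
          congr 1
          linear_combination C * (√n)⁻¹ * hsq
  have hlim : Tendsto (fun n : ℕ => Real.exp (C * (√n)⁻¹) * J) atTop (𝓝 (Real.exp (C * 0) * J)) :=
    ((Real.continuous_exp.tendsto _).comp ((tendsto_inv_atTop_zero.comp
      (Real.tendsto_sqrt_atTop.comp tendsto_natCast_atTop_atTop)).const_mul C)).mul_const J
  rw [mul_zero, Real.exp_zero, one_mul] at hlim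
  exact ge_of_tendsto hlim ((eventually_gt_atTop 0).mono hbound)

end Flow

section Approximation

open scoped NNReal

lemma Tame.mono {E : Type*} [NormedAddCommGroup E] [NormedSpace ℝ E] {δ : ℝ} {K K' : ℝ≥0}
    {f : E → ℝ} (hf : Tame δ K f) (hK : K ≤ K') : Tame δ K' f where
  lower := hf.lower
  upper x := (hf.upper x).trans hK
  differentiable := hf.differentiable
  lipschitz := hf.lipschitz.weaken hK
  lipschitz_fderiv := hf.lipschitz_fderiv.weaken hK

lemma tendsto_integral_sq_of_tendsto_eLpNorm {α β : Type*} [MeasurableSpace α] {μ : Measure α}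
    {l : Filter β} {s : α → ℝ} {g : β → α → ℝ} (hs : MemLp s 2 μ) (hg : ∀ k, MemLp (g k) 2 μ)
    (h : Tendsto (fun k => eLpNorm (g k - s) 2 μ) l (𝓝 0)) :
    Tendsto (fun k => ∫ x, g k x ^ 2 ∂μ) l (𝓝 (∫ x, s x ^ 2 ∂μ)) := by
  have hnorm {v : α → ℝ} (hv : MemLp v 2 μ) : ‖hv.toLp v‖ ^ 2 = ∫ x, v x ^ 2 ∂μ := by
    rw [← real_inner_self_eq_norm_sq, L2.inner_def]
    refine integral_congr_ae ?_
    filter_upwards [hv.coeFn_toLp] with x hx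
    rw [hx, real_inner_self_eq_norm_sq, Real.norm_eq_abs, sq_abs]
  simpa only [hnorm] using ((Lp.tendsto_Lp_iff_tendsto_eLpNorm'' g hg s hs).2 h).norm.pow 2

lemma exists_tame_sq_add {E : Type*} [NormedAddCommGroup E] [NormedSpace ℝ E] {g : E → ℝ}
    (hg : ContDiff ℝ 2 g) (hgs : HasCompactSupport g) {δ : ℝ} (hδ : 0 ≤ δ) :
    ∃ K, Tame δ K fun x => g x ^ 2 + δ := by
  have hv : ContDiff ℝ 2 fun x => g x ^ 2 := hg.pow 2
  have hvs : HasCompactSupport fun x => g x ^ 2 := hgs.comp_left (g := (· ^ 2)) (by simp)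
  obtain ⟨M, hM⟩ := hv.continuous.bounded_above_of_compact_support hvs
  obtain ⟨L, hL⟩ := hv.lipschitzWith_of_hasCompactSupport hvs two_ne_zero
  obtain ⟨L', hL'⟩ := (hv.fderiv_right (m := 1) (by norm_num)).lipschitzWith_of_hasCompactSupport
    (hvs.fderiv ℝ) one_ne_zero
  have hM0 : 0 ≤ M := (norm_nonneg _).trans (hM 0)
  refine ⟨⟨M + δ, by positivity⟩ ⊔ L ⊔ L', ⟨fun x => ?_, fun x => ?_,
    (hv.differentiable two_ne_zero).add_const δ, ?_, ?_⟩⟩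
  · exact le_add_of_nonneg_left (sq_nonneg _)
  · refine le_trans ?_ (NNReal.coe_le_coe.2 (le_sup_left.trans le_sup_left))
    exact add_le_add_left ((le_abs_self _).trans (hM x)) δ
  · exact (LipschitzWith.of_dist_le_mul fun x y => by
      simpa [dist_add_right] using hL.dist_le_mul x y).weaken (le_sup_right.trans le_sup_left)
  · rw [show fderiv ℝ (fun x => g x ^ 2 + δ) = fderiv ℝ fun x => g x ^ 2 from
      funext fun x => fderiv_add_const δ]
    exact hL'.weaken le_sup_right

variable {E : Type*} [NormedAddCommGroup E] [InnerProductSpace ℝ E] [FiniteDimensional ℝ E]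
  [MeasurableSpace E] [BorelSpace E]

-- `√f ∈ L²` is approximated by test functions `g k`, and `u k = g k ^ 2 + 1 / (k + 1)`.
lemma exists_tame_seq {f : E → ℝ} (hf : Integrable f γ[E]) (hf0 : ∀ x, 0 ≤ f x) :
    ∃ u : ℕ → E → ℝ, (∀ k : ℕ, ∃ K, Tame (1 / ((k : ℝ) + 1)) K (u k)) ∧
      (∀ᵐ x ∂γ[E], Tendsto (fun k => u k x) atTop (𝓝 (f x))) ∧
      Tendsto (fun k => ∫ x, u k x ∂γ[E]) atTop (𝓝 (∫ x, f x ∂γ[E])) := by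
  have hsq (x : E) : √(f x) ^ 2 = f x := Real.sq_sqrt (hf0 x)
  have hs : MemLp (fun x => √(f x)) 2 γ[E] := by
    rw [memLp_two_iff_integrable_sq (Real.continuous_sqrt.comp_aestronglyMeasurable hf.1)]
    simpa only [hsq] using hf
  choose g hgs hg hgε using fun k : ℕ => hs.exist_eLpNorm_sub_le (by simp) (by simp)
    (Nat.one_div_pos_of_nat (α := ℝ) (n := k))
  have hgL (k : ℕ) : MemLp (g k) 2 γ[E] := (hg k).continuous.memLp_of_hasCompactSupport (hgs k)
  have hdecay := tendsto_one_div_add_atTop_nhds_zero_nat (𝕜 := ℝ)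
  have hlim : Tendsto (fun k => eLpNorm (g k - fun x => √(f x)) 2 γ[E]) atTop (𝓝 0) :=
    tendsto_of_tendsto_of_tendsto_of_le_of_le tendsto_const_nhds
      (by simpa using ENNReal.tendsto_ofReal hdecay) (fun _ => zero_le)
      (fun k => (eLpNorm_sub_comm _ _ _ _).trans_le (hgε k))
  obtain ⟨n, hn, hae⟩ := (tendstoInMeasure_of_tendsto_eLpNorm (by simp)
    (fun k => (hgL k).1) hs.1 hlim).exists_seq_tendsto_ae
  refine ⟨fun k x => g (n k) x ^ 2 + 1 / ((k : ℝ) + 1), fun k => exists_tame_sq_add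
    (contDiff_infty.1 (hg _) 2) (hgs _) (by positivity), ?_, ?_⟩
  · filter_upwards [hae] with x hx
    simpa only [hsq, add_zero] using (hx.pow 2).add hdecay
  · have hlim_sq := ((tendsto_integral_sq_of_tendsto_eLpNorm hs hgL hlim).comp
      hn.tendsto_atTop).add hdecay
    simp only [hsq, add_zero] at hlim_sq
    refine hlim_sq.congr fun k => ?_
    rw [integral_add (hgL _).integrable_sq (integrable_const _)]
    simp

variable {ι : Type*} [Fintype ι] {G : ι → Type*} [∀ i, NormedAddCommGroup (G i)]
  [∀ i, InnerProductSpace ℝ (G i)] [∀ i, FiniteDimensional ℝ (G i)] [∀ i, MeasurableSpace (G i)]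
  [∀ i, BorelSpace (G i)] {A : ∀ i, E →L[ℝ] G i} {p : ι → ℝ} {f : ∀ i, G i → ℝ}

namespace CoisometricDatum

variable (hA : CoisometricDatum A p)
include hA

lemma lintegral_prodRpow_le_of_tame {δ : ℝ} (hδ : 0 < δ) (hf : ∀ i, ∃ K, Tame δ K (f i)) :
    ∫⁻ z, ENNReal.ofReal (prodRpow A p f z) ∂γ[E] ≤
      ENNReal.ofReal (∏ i, (∫ w, f i w ∂γ[G i]) ^ p i) := by
  choose K hK using hf
  have hf (i : ι) : Tame δ (Finset.univ.sup K) (f i) :=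
    (hK i).mono (Finset.le_sup (Finset.mem_univ i))
  rw [← ofReal_integral_eq_lintegral_ofReal
    (.of_bound (Tame.continuous_prodRpow hδ hf).aestronglyMeasurable _
      (.of_forall (Tame.norm_prodRpow_le hδ hf hA.nonneg)))
    (.of_forall (prodRpow_nonneg fun i => (hf i).nonneg hδ.le))]
  exact ENNReal.ofReal_le_ofReal (hA.integral_prodRpow_le hδ hf)

theorem lintegral_prodRpow_le (hf : ∀ i, Integrable (f i) γ[G i]) (hf0 : ∀ i x, 0 ≤ f i x) :
    ∫⁻ z, ENNReal.ofReal (prodRpow A p f z) ∂γ[E] ≤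
      ENNReal.ofReal (∏ i, (∫ w, f i w ∂γ[G i]) ^ p i) := by
  choose u hu hae hint using fun i => exists_tame_seq (hf i) (hf0 i)
  have hδ (k : ℕ) : (0 : ℝ) < 1 / ((k : ℝ) + 1) := by positivity
  have hmeas (k : ℕ) : AEMeasurable
      (fun z => ENNReal.ofReal (prodRpow A p (fun i => u i k) z)) γ[E] := by
    choose K hK using fun i => hu i k
    refine (Finset.measurable_prod _ fun i _ => ?_).ennreal_ofReal.aemeasurable
    exact ((hK i).lipschitz.continuous.measurable.comp (A i).measurable).pow_const _
  have hpointwise : ∀ᵐ z ∂γ[E], ENNReal.ofReal (prodRpow A p f z) =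
      liminf (fun k => ENNReal.ofReal (prodRpow A p (fun i => u i k) z)) atTop := by
    filter_upwards [ae_all_iff.2 fun i => (measurePreserving_stdGaussian (A i)
      (hA.norm_adjoint i)).quasiMeasurePreserving.ae (hae i)] with z hz
    exact (ENNReal.tendsto_ofReal (tendsto_finsetProd _ fun i _ =>
      (hz i).rpow_const (.inr (hA.nonneg i)))).liminf_eq.symm
  calc ∫⁻ z, ENNReal.ofReal (prodRpow A p f z) ∂γ[E]
      = ∫⁻ z, liminf (fun k => ENNReal.ofReal (prodRpow A p (fun i => u i k) z)) atTop ∂γ[E] :=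
        lintegral_congr_ae hpointwise
    _ ≤ liminf (fun k => ∫⁻ z, ENNReal.ofReal (prodRpow A p (fun i => u i k) z) ∂γ[E]) atTop :=
        lintegral_liminf_le' hmeas
    _ ≤ liminf (fun k => ENNReal.ofReal (∏ i, (∫ w, u i k w ∂γ[G i]) ^ p i)) atTop :=
        liminf_le_liminf (.of_forall fun k =>
          hA.lintegral_prodRpow_le_of_tame (hδ k) fun i => hu i k)
    _ = ENNReal.ofReal (∏ i, (∫ w, f i w ∂γ[G i]) ^ p i) :=
        (ENNReal.tendsto_ofReal (tendsto_finsetProd _ fun i _ =>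
          (hint i).rpow_const (.inr (hA.nonneg i)))).liminf_eq

end CoisometricDatum

end Approximation

section SignedCopies

section Adjoint

variable {E F G : Type*} [NormedAddCommGroup E] [InnerProductSpace ℝ E] [CompleteSpace E]
  [NormedAddCommGroup F] [InnerProductSpace ℝ F] [CompleteSpace F] [NormedAddCommGroup G]
  [InnerProductSpace ℝ G] [CompleteSpace G]

lemma norm_sq_adjoint_comp_fstL_add_comp_sndL (A : E →L[ℝ] G) (B : F →L[ℝ] G) (t : G) :
    ‖((A ∘L WithLp.fstL 2 ℝ E F + B ∘L WithLp.sndL 2 ℝ E F)†) t‖ ^ 2 =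
      ‖(A†) t‖ ^ 2 + ‖(B†) t‖ ^ 2 := by
  have hadjoint : ((A ∘L WithLp.fstL 2 ℝ E F + B ∘L WithLp.sndL 2 ℝ E F)†) t =
      WithLp.toLp 2 ((A†) t, (B†) t) := ext_inner_left ℝ fun w => by
    rw [ContinuousLinearMap.adjoint_inner_right, WithLp.prod_inner_apply]
    simp [inner_add_left, ContinuousLinearMap.adjoint_inner_right]
  rw [hadjoint, WithLp.prod_norm_sq_eq_of_L2]
  rfl

lemma norm_adjoint_comp_proj {κ : Type*} [Fintype κ] {F : κ → Type*}
    [∀ k, NormedAddCommGroup (F k)] [∀ k, InnerProductSpace ℝ (F k)] [∀ k, CompleteSpace (F k)]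
    (k : κ) (B : F k →L[ℝ] G) (t : G) :
    ‖((B ∘L PiLp.proj (𝕜 := ℝ) 2 F k)†) t‖ = ‖(B†) t‖ := by
  classical
  have hadjoint : ((B ∘L PiLp.proj (𝕜 := ℝ) 2 F k)†) t = PiLp.single 2 k ((B†) t) :=
    ext_inner_left ℝ fun w => by
      rw [ContinuousLinearMap.adjoint_inner_right, PiLp.inner_apply,
        Finset.sum_eq_single k (fun j _ hj => by simp [hj]) (by simp)]
      simp [ContinuousLinearMap.adjoint_inner_right]
  rw [hadjoint, PiLp.norm_single]

end Adjoint

variable {ι : Type*} {E : Type*} [NormedAddCommGroup E] [InnerProductSpace ℝ E]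
  {F : ι → Type*} [∀ i, NormedAddCommGroup (F i)] [∀ i, InnerProductSpace ℝ (F i)]
  {G : ι → Type*} [∀ i, NormedAddCommGroup (G i)] [∀ i, InnerProductSpace ℝ (G i)]

/-- The maps `(z, y) ↦ A i z ± B i (y (i, l))`, where `y` consists of `n` independent copies of a
point of each `F i`. The index is `((i, l), σ)` and the sign is `(-1) ^ σ`. -/
def signedCopy (A : ∀ i, E →L[ℝ] G i) (B : ∀ i, F i →L[ℝ] G i) (n : ℕ)
    (q : (ι × Fin n) × Fin 2) :
    WithLp 2 (E × PiLp 2 fun k : ι × Fin n => F k.1) →L[ℝ] G q.1.1 :=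
  A q.1.1 ∘L WithLp.fstL 2 ℝ E _ +
    ((-1 : ℝ) ^ (q.2 : ℕ) • B q.1.1 ∘L PiLp.proj (𝕜 := ℝ) 2 (fun k : ι × Fin n => F k.1) q.1) ∘L
      WithLp.sndL 2 ℝ E _

variable {A : ∀ i, E →L[ℝ] G i} {B : ∀ i, F i →L[ℝ] G i} {p : ι → ℝ} {n : ℕ}

lemma signedCopy_zero (k : ι × Fin n) (w : WithLp 2 (E × PiLp 2 fun k : ι × Fin n => F k.1)) :
    signedCopy A B n (k, 0) w = A k.1 w.fst + B k.1 (w.snd k) := by simp [signedCopy]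

lemma signedCopy_one (k : ι × Fin n) (w : WithLp 2 (E × PiLp 2 fun k : ι × Fin n => F k.1)) :
    signedCopy A B n (k, 1) w = A k.1 w.fst - B k.1 (w.snd k) := by
  simp [signedCopy, sub_eq_add_neg]

variable [Fintype ι]

lemma sum_norm_sq_signedCopy (hn : n ≠ 0)
    (w : WithLp 2 (E × PiLp 2 fun k : ι × Fin n => F k.1)) :
    ∑ q, p q.1.1 / (2 * n) * ‖signedCopy A B n q w‖ ^ 2 =
      ∑ i, p i * ‖A i w.fst‖ ^ 2 + ∑ k, p k.1 / n * ‖B k.1 (w.snd k)‖ ^ 2 := by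
  have hpair (k : ι × Fin n) : ∑ σ, p k.1 / (2 * n) * ‖signedCopy A B n (k, σ) w‖ ^ 2 =
      p k.1 / n * ‖A k.1 w.fst‖ ^ 2 + p k.1 / n * ‖B k.1 (w.snd k)‖ ^ 2 := by
    rw [Fin.sum_univ_two, signedCopy_zero, signedCopy_one, ← mul_add,
      parallelogram_law_with_norm ℝ (A k.1 w.fst)]
    ring
  rw [Fintype.sum_prod_type]
  simp only [hpair, Finset.sum_add_distrib]
  congr 1
  rw [Fintype.sum_prod_type]
  refine Finset.sum_congr rfl fun i _ => ?_
  change ∑ _l : Fin n, p i / n * ‖A i w.fst‖ ^ 2 = p i * ‖A i w.fst‖ ^ 2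
  rw [Finset.sum_const, Finset.card_univ, Fintype.card_fin, nsmul_eq_mul]
  field_simp

lemma prod_rpow_div_two_mul (hn : n ≠ 0) {a : ι → ℝ} (ha : ∀ i, 0 ≤ a i) :
    ∏ q : (ι × Fin n) × Fin 2, a q.1.1 ^ (p q.1.1 / (2 * n)) = ∏ i, a i ^ p i := by
  simp only [Fintype.prod_prod_type, Finset.prod_const, Finset.card_univ, Fintype.card_fin,
    ← pow_mul]
  refine Finset.prod_congr rfl fun i _ => ?_
  rw [← Real.rpow_mul_natCast (ha i)]
  congr 1
  push_cast
  field_simp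

lemma prodRpow_le_prodRpow_signedCopy (hn : n ≠ 0) (hp : ∀ i, 0 ≤ p i) {f : ∀ i, G i → ℝ}
    (hf0 : ∀ i x, 0 ≤ f i x) (hmid : ∀ i x y, f i x ^ 2 ≤ f i (x + B i y) * f i (x - B i y))
    (w : WithLp 2 (E × PiLp 2 fun k : ι × Fin n => F k.1)) :
    prodRpow A p f w.fst ≤ prodRpow (signedCopy A B n) (fun q => p q.1.1 / (2 * n))
      (fun q => f q.1.1) w := by
  have hpair (k : ι × Fin n) : ∏ _σ : Fin 2, f k.1 (A k.1 w.fst) ^ (p k.1 / (2 * n)) ≤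
      ∏ σ, f k.1 (signedCopy A B n (k, σ) w) ^ (p k.1 / (2 * n)) := by
    rw [Fin.prod_univ_two, Fin.prod_univ_two, signedCopy_zero, signedCopy_one,
      ← Real.mul_rpow (hf0 _ _) (hf0 _ _), ← Real.mul_rpow (hf0 _ _) (hf0 _ _), ← sq]
    exact Real.rpow_le_rpow (sq_nonneg _) (hmid k.1 _ _) (div_nonneg (hp k.1) (by positivity))
  calc prodRpow A p f w.fst
      = ∏ q : (ι × Fin n) × Fin 2, f q.1.1 (A q.1.1 w.fst) ^ (p q.1.1 / (2 * n)) :=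
        (prod_rpow_div_two_mul hn fun i => hf0 i _).symm
    _ = ∏ k : ι × Fin n, ∏ _σ : Fin 2, f k.1 (A k.1 w.fst) ^ (p k.1 / (2 * n)) :=
        Fintype.prod_prod_type _
    _ ≤ ∏ k : ι × Fin n, ∏ σ, f k.1 (signedCopy A B n (k, σ) w) ^ (p k.1 / (2 * n)) :=
        Finset.prod_le_prod (fun k _ => Finset.prod_nonneg fun _ _ =>
          Real.rpow_nonneg (hf0 _ _) _) fun k _ => hpair k
    _ = prodRpow (signedCopy A B n) (fun q => p q.1.1 / (2 * n)) (fun q => f q.1.1) w :=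
        (Fintype.prod_prod_type fun q : (ι × Fin n) × Fin 2 =>
          f q.1.1 (signedCopy A B n q w) ^ (p q.1.1 / (2 * n))).symm

variable [FiniteDimensional ℝ E] [∀ i, FiniteDimensional ℝ (F i)]
  [∀ i, FiniteDimensional ℝ (G i)]

lemma coisometricDatum_signedCopy (hn : n ≠ 0) (hp : ∀ i, 0 ≤ p i) (hpn : ∀ i, p i ≤ n)
    (hAB : ∀ i t, ‖((A i)†) t‖ ^ 2 + ‖((B i)†) t‖ ^ 2 = ‖t‖ ^ 2)
    (hsum : ∀ z, ∑ i, p i * ‖A i z‖ ^ 2 ≤ ‖z‖ ^ 2) :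
    CoisometricDatum (signedCopy A B n) fun q => p q.1.1 / (2 * n) where
  norm_adjoint := fun ⟨⟨i, l⟩, σ⟩ t => by
    rw [← sq_eq_sq₀ (norm_nonneg _) (norm_nonneg _), signedCopy,
      norm_sq_adjoint_comp_fstL_add_comp_sndL, map_smulₛₗ, _root_.smul_apply, norm_smul,
      norm_adjoint_comp_proj]
    simp [hAB]
  nonneg q := div_nonneg (hp _) (by positivity)
  sum_le w := by
    have hB (k : ι × Fin n) : p k.1 / n * ‖B k.1 (w.snd k)‖ ^ 2 ≤ ‖w.snd k‖ ^ 2 := by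
      have hnorm : ‖B k.1‖ ≤ 1 := by
        rw [← ContinuousLinearMap.adjoint.norm_map (B k.1)]
        refine ContinuousLinearMap.opNorm_le_bound _ zero_le_one fun t => ?_
        rw [one_mul, ← sq_le_sq₀ (norm_nonneg _) (norm_nonneg _), ← hAB k.1 t]
        exact le_add_of_nonneg_left (sq_nonneg _)
      calc p k.1 / n * ‖B k.1 (w.snd k)‖ ^ 2 ≤ 1 * ‖w.snd k‖ ^ 2 := by
            gcongr
            · exact div_le_one_of_le₀ (hpn _) n.cast_nonneg
            · simpa using (B k.1).le_of_opNorm_le hnorm (w.snd k)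
        _ = ‖w.snd k‖ ^ 2 := one_mul _
    rw [sum_norm_sq_signedCopy hn, WithLp.prod_norm_sq_eq_of_L2, PiLp.norm_sq_eq_of_L2]
    exact add_le_add (hsum _) (Finset.sum_le_sum fun k _ => hB k)

variable [MeasurableSpace E] [BorelSpace E] [∀ i, MeasurableSpace (F i)] [∀ i, BorelSpace (F i)]
  [∀ i, MeasurableSpace (G i)] [∀ i, BorelSpace (G i)]

theorem lintegral_prodRpow_le_of_sq_le_mul (hp : ∀ i, 0 ≤ p i)
    (hAB : ∀ i t, ‖((A i)†) t‖ ^ 2 + ‖((B i)†) t‖ ^ 2 = ‖t‖ ^ 2)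
    (hsum : ∀ z, ∑ i, p i * ‖A i z‖ ^ 2 ≤ ‖z‖ ^ 2) {f : ∀ i, G i → ℝ}
    (hf : ∀ i, Integrable (f i) γ[G i]) (hf0 : ∀ i x, 0 ≤ f i x)
    (hmid : ∀ i x y, f i x ^ 2 ≤ f i (x + B i y) * f i (x - B i y)) :
    ∫⁻ z, ENNReal.ofReal (prodRpow A p f z) ∂γ[E] ≤
      ENNReal.ofReal (∏ i, (∫ w, f i w ∂γ[G i]) ^ p i) := by
  obtain ⟨n, hn, hpn⟩ : ∃ n : ℕ, n ≠ 0 ∧ ∀ i, p i ≤ n :=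
    ⟨⌈∑ i, p i⌉₊ + 1, by simp, fun i => (Finset.single_le_sum (fun i _ => hp i)
      (Finset.mem_univ i)).trans ((Nat.le_ceil _).trans (by simp))⟩
  have hfst := measurePreserving_stdGaussian
    (WithLp.fstL 2 ℝ E (PiLp 2 fun k : ι × Fin n => F k.1)) fun t => by
      rw [← sq_eq_sq₀ (norm_nonneg _) (norm_nonneg _)]
      have hsq := norm_sq_adjoint_comp_fstL_add_comp_sndL (.id ℝ E)
        (0 : (PiLp 2 fun k : ι × Fin n => F k.1) →L[ℝ] E) t
      simpa only [ContinuousLinearMap.id_comp, ContinuousLinearMap.zero_comp, add_zero, map_zero,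
        ContinuousLinearMap.adjoint_id, ContinuousLinearMap.id_apply,
        _root_.zero_apply, norm_zero, zero_pow two_ne_zero] using hsq
  calc ∫⁻ z, ENNReal.ofReal (prodRpow A p f z) ∂γ[E]
      ≤ ∫⁻ w, ENNReal.ofReal (prodRpow A p f w.fst)
          ∂γ[WithLp 2 (E × PiLp 2 fun k : ι × Fin n => F k.1)] := by
        rw [← hfst.map_eq]
        exact lintegral_map_le _ _
    _ ≤ ∫⁻ w, ENNReal.ofReal (prodRpow (signedCopy A B n) (fun q => p q.1.1 / (2 * n))
          (fun q => f q.1.1) w) ∂γ[WithLp 2 (E × PiLp 2 fun k : ι × Fin n => F k.1)] :=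
        lintegral_mono fun w =>
          ENNReal.ofReal_le_ofReal (prodRpow_le_prodRpow_signedCopy hn hp hf0 hmid w)
    _ ≤ ENNReal.ofReal (∏ q : (ι × Fin n) × Fin 2,
          (∫ x, f q.1.1 x ∂γ[G q.1.1]) ^ (p q.1.1 / (2 * n))) :=
        (coisometricDatum_signedCopy hn hp hpn hAB hsum).lintegral_prodRpow_le
          (fun q => hf q.1.1) fun q => hf0 q.1.1
    _ = ENNReal.ofReal (∏ i, (∫ x, f i x ∂γ[G i]) ^ p i) :=
        congrArg ENNReal.ofReal (prod_rpow_div_two_mul (a := fun i => ∫ x, f i x ∂γ[G i]) hn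
          fun i => integral_nonneg (hf0 i))

end SignedCopies

section MatrixLemmas

section Factorization

open scoped ComplexOrder

variable {𝕜 m n : Type*} [RCLike 𝕜] [Fintype m] [DecidableEq m] [Fintype n] [DecidableEq n]

lemma posSemidef_inv_sub_mul_conjTranspose_iff {D : Matrix m m 𝕜} (hD : D.PosDef)
    (U : Matrix m n 𝕜) :
    (D⁻¹ - U * Uᴴ).PosSemidef ↔ (1 - Uᴴ * D * U).PosSemidef := by
  -- Both sides are Schur complements in the block matrix with rows `D⁻¹, U` and `Uᴴ, 1`.
  let := hD.isUnit.invertible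
  let := (PosDef.one (n := n) (R := 𝕜)).isUnit.invertible
  have h₁₁ := PosDef.fromBlocks₁₁ U (1 : Matrix n n 𝕜) hD.inv
  have h₂₂ := PosDef.fromBlocks₂₂ D⁻¹ U (PosDef.one (n := n) (R := 𝕜))
  rw [inv_inv_of_invertible] at h₁₁
  rw [inv_one, Matrix.mul_one] at h₂₂
  exact h₂₂.symm.trans h₁₁

omit [DecidableEq m] in
lemma exists_mul_conjTranspose_eq_and_mul_eq_zero {S W : Matrix m m 𝕜} (hS : S.PosSemidef)
    (hW : W.IsHermitian) (hSW : S * W = 0) : ∃ B : Matrix m m 𝕜, B * Bᴴ = S ∧ W * B = 0 := by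
  classical
  open scoped MatrixOrder Matrix.Norms.L2Operator in
  obtain ⟨B, hB⟩ := CStarAlgebra.nonneg_iff_eq_mul_star_self.mp hS.nonneg
  refine ⟨B, hB.symm, (mul_self_mul_conjTranspose_eq_zero B W).mp ?_⟩
  calc W * (B * Bᴴ) = Wᴴ * Sᴴ := by rw [hW.eq, hS.1.eq, hB, star_eq_conjTranspose]
    _ = 0 := by rw [← conjTranspose_mul, hSW, conjTranspose_zero]

end Factorization

variable {m n : Type*} [Fintype m] [DecidableEq m] [Fintype n] [DecidableEq n]

/-- The continuous linear map between Euclidean spaces given by a real matrix. -/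
def euclideanMap (M : Matrix m n ℝ) : EuclideanSpace ℝ n →L[ℝ] EuclideanSpace ℝ m :=
  (toEuclideanLin M).toContinuousLinearMap

omit [DecidableEq m] in
lemma ofLp_euclideanMap (M : Matrix m n ℝ) (z : EuclideanSpace ℝ n) :
    (euclideanMap M z).ofLp = M *ᵥ z.ofLp := rfl

lemma adjoint_euclideanMap (M : Matrix m n ℝ) : (euclideanMap M)† = euclideanMap Mᵀ := by
  rw [← conjTranspose_eq_transpose_of_trivial, euclideanMap, euclideanMap,
    toEuclideanLin_conjTranspose_eq_adjoint, LinearMap.adjoint_toContinuousLinearMap]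

omit [DecidableEq m] in
lemma norm_sq_adjoint_euclideanMap (M : Matrix m n ℝ) (t : EuclideanSpace ℝ m) :
    ‖((euclideanMap M)†) t‖ ^ 2 = t.ofLp ⬝ᵥ (M * Mᵀ) *ᵥ t.ofLp := by
  classical
  rw [adjoint_euclideanMap, ← real_inner_self_eq_norm_sq, EuclideanSpace.inner_eq_star_dotProduct,
    star_trivial, ofLp_euclideanMap, ← mulVec_mulVec, dotProduct_mulVec _ M, mulVec_transpose]

lemma norm_sq_adjoint_euclideanMap_add {k : Type*} [Fintype k] [DecidableEq k]
    {M : Matrix m n ℝ} {B : Matrix m k ℝ} (h : M * Mᵀ + B * Bᵀ = 1) (t : EuclideanSpace ℝ m) :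
    ‖((euclideanMap M)†) t‖ ^ 2 + ‖((euclideanMap B)†) t‖ ^ 2 = ‖t‖ ^ 2 := by
  rw [norm_sq_adjoint_euclideanMap, norm_sq_adjoint_euclideanMap, ← dotProduct_add, ← add_mulVec,
    h, one_mulVec, ← real_inner_self_eq_norm_sq, EuclideanSpace.inner_eq_star_dotProduct,
    star_trivial]

omit [DecidableEq n] in
lemma sum_mul_sq_mulVec_le {d : m → ℝ} (hd : ∀ q, 0 < d q) {U : Matrix m n ℝ}
    (h : ((diagonal d)⁻¹ - U * Uᵀ).PosSemidef) (z : n → ℝ) :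
    ∑ q, d q * (U *ᵥ z) q ^ 2 ≤ z ⬝ᵥ z := by
  classical
  rw [← conjTranspose_eq_transpose_of_trivial,
    posSemidef_inv_sub_mul_conjTranspose_iff (PosDef.diagonal hd)] at h
  have hquad := h.dotProduct_mulVec_nonneg z
  rw [star_trivial, sub_mulVec, one_mulVec, dotProduct_sub, sub_nonneg] at hquad
  refine le_trans (le_of_eq ?_) hquad
  rw [← mulVec_mulVec, ← mulVec_mulVec, conjTranspose_eq_transpose_of_trivial, dotProduct_mulVec,
    vecMul_transpose]
  refine Finset.sum_congr rfl fun q _ => ?_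
  rw [mulVec_diagonal]
  ring

lemma sum_mul_norm_sq_euclideanMap_submatrix_le {ι : Type*} [Fintype ι] [DecidableEq ι]
    {a : ι → Type*} [∀ i, Fintype (a i)] [∀ i, DecidableEq (a i)] {p : ι → ℝ}
    (hp : ∀ i, 0 < p i) {U : Matrix (Σ i, a i) n ℝ}
    (h : ((diagonal fun q : Σ i, a i => p q.1)⁻¹ - U * Uᵀ).PosSemidef) (z : EuclideanSpace ℝ n) :
    ∑ i, p i * ‖euclideanMap (U.submatrix (Sigma.mk i) id) z‖ ^ 2 ≤ ‖z‖ ^ 2 := by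
  have hquad := sum_mul_sq_mulVec_le (d := fun q : Σ i, a i => p q.1) (fun q => hp q.1) h z.ofLp
  calc ∑ i, p i * ‖euclideanMap (U.submatrix (Sigma.mk i) id) z‖ ^ 2
      = ∑ q : Σ i, a i, p q.1 * (U *ᵥ z.ofLp) q ^ 2 := by
        rw [Fintype.sum_sigma]
        refine Finset.sum_congr rfl fun i _ => ?_
        rw [EuclideanSpace.real_norm_sq_eq, Finset.mul_sum]
        rfl
    _ ≤ z.ofLp ⬝ᵥ z.ofLp := hquad
    _ = ‖z‖ ^ 2 := by
        rw [← real_inner_self_eq_norm_sq, EuclideanSpace.inner_eq_star_dotProduct, star_trivial]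

end MatrixLemmas

section MoreLogConvex

variable {k : ℕ} {W : Matrix (Fin k) (Fin k) ℝ} {f h : (Fin k → ℝ) → ℝ}

lemma nonneg_of_moreLogConvex (hf : MoreLogConvex f W) (x : Fin k → ℝ) : 0 ≤ f x := by
  obtain ⟨h, hh, rfl⟩ := hf
  exact mul_nonneg (Real.exp_nonneg _) (hh.1 x)

lemma gaussFn_add_of_mulVec_eq_zero (hW : W.IsHermitian) {v : Fin k → ℝ} (hv : W *ᵥ v = 0)
    (x : Fin k → ℝ) : gaussFn W (x + v) = gaussFn W x := by
  have hcross : W *ᵥ x ⬝ᵥ v = 0 := by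
    rw [← hW.eq, conjTranspose_eq_transpose_of_trivial, mulVec_transpose,
      ← dotProduct_mulVec, hv, dotProduct_zero]
  rw [gaussFn, gaussFn, mulVec_add, hv, add_zero, dotProduct_add, hcross, add_zero]

lemma sq_le_mul_of_logConvexFun (hh : LogConvexFun h) (x v : Fin k → ℝ) :
    h x ^ 2 ≤ h (x + v) * h (x - v) := by
  have hmid := hh.2 (x + v) (x - v) (1 / 2) (1 / 2) (by norm_num) (by norm_num) (by norm_num)
  rw [← smul_add, add_add_sub_cancel, ← two_smul ℝ x, smul_smul, one_div_mul_cancel two_ne_zero,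
    one_smul, ← Real.mul_rpow (hh.1 _) (hh.1 _), ← Real.sqrt_eq_rpow] at hmid
  exact (Real.le_sqrt (hh.1 x) (mul_nonneg (hh.1 _) (hh.1 _))).mp hmid

lemma sq_le_mul_of_moreLogConvex (hW : W.IsHermitian) (hf : MoreLogConvex f W) {v : Fin k → ℝ}
    (hv : W *ᵥ v = 0) (x : Fin k → ℝ) : f x ^ 2 ≤ f (x + v) * f (x - v) := by
  obtain ⟨h, hh, rfl⟩ := hf
  have hsub : gaussFn W (x - v) = gaussFn W x := by
    rw [sub_eq_add_neg, gaussFn_add_of_mulVec_eq_zero hW (by rw [mulVec_neg, hv, neg_zero])]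
  calc (gaussFn W x * h x) ^ 2 = gaussFn W x ^ 2 * h x ^ 2 := mul_pow _ _ _
    _ ≤ gaussFn W x ^ 2 * (h (x + v) * h (x - v)) := by
        gcongr
        exact sq_le_mul_of_logConvexFun hh x v
    _ = gaussFn W (x + v) * h (x + v) * (gaussFn W (x - v) * h (x - v)) := by
        rw [gaussFn_add_of_mulVec_eq_zero hW hv, hsub]
        ring

end MoreLogConvex

section StandardGaussian

open ProbabilityTheory (gaussianReal gaussianPDFReal)

lemma pi_withDensity_ofReal {ι : Type*} [Fintype ι] {X : ι → Type*} [∀ i, MeasurableSpace (X i)]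
    {μ : ∀ i, Measure (X i)} [∀ i, SigmaFinite (μ i)] {g : ∀ i, X i → ℝ}
    (hg : ∀ i, Integrable (g i) (μ i)) (hg0 : ∀ i x, 0 ≤ g i x) :
    Measure.pi (fun i => (μ i).withDensity fun x => ENNReal.ofReal (g i x)) =
      (Measure.pi μ).withDensity fun x => ENNReal.ofReal (∏ i, g i (x i)) := by
  have (i : ι) : IsFiniteMeasure ((μ i).withDensity fun x => ENNReal.ofReal (g i x)) :=
    isFiniteMeasure_withDensity_ofReal (hg i).2
  refine Measure.pi_eq fun s hs => ?_
  rw [withDensity_apply _ (MeasurableSet.univ_pi hs), Measure.restrict_pi_pi,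
    ← ofReal_integral_eq_lintegral_ofReal (Integrable.fintype_prod_dep fun i => (hg i).restrict)
      (ae_of_all _ fun x => Finset.prod_nonneg fun i _ => hg0 i _),
    integral_fintype_prod_eq_prod,
    ENNReal.ofReal_prod_of_nonneg fun i _ => integral_nonneg (hg0 i)]
  refine Finset.prod_congr rfl fun i _ => ?_
  rw [withDensity_apply _ (hs i),
    ofReal_integral_eq_lintegral_ofReal (hg i).restrict (ae_of_all _ (hg0 i))]

lemma prod_gaussianPDFReal (k : ℕ) (x : Fin k → ℝ) :
    ∏ i, gaussianPDFReal 0 1 (x i) =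
      (2 * Real.pi) ^ (-(k : ℝ) / 2) * Real.exp (-(∑ i, x i ^ 2) / 2) := by
  simp only [gaussianPDFReal, Finset.prod_mul_distrib, ← Real.exp_sum, NNReal.coe_one, mul_one,
    sub_zero, Finset.prod_const, Finset.card_univ, Fintype.card_fin]
  congr 1
  · rw [Real.sqrt_eq_rpow, ← Real.rpow_neg (by positivity), ← Real.rpow_mul_natCast (by positivity)]
    congr 1
    ring
  · rw [← Finset.sum_div, Finset.sum_neg_distrib]

lemma stdGaussian_eq_pi (k : ℕ) :
    _root_.stdGaussian k = Measure.pi fun _ : Fin k => gaussianReal 0 1 := by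
  simp only [ProbabilityTheory.gaussianReal_of_var_ne_zero 0 one_ne_zero]
  rw [_root_.stdGaussian, volume_pi]
  simp only [← prod_gaussianPDFReal]
  exact (pi_withDensity_ofReal (fun _ => ProbabilityTheory.integrable_gaussianPDFReal 0 1)
    fun _ => ProbabilityTheory.gaussianPDFReal_nonneg 0 1).symm

lemma measurePreserving_ofLp (k : ℕ) :
    MeasurePreserving WithLp.ofLp γ[EuclideanSpace ℝ (Fin k)] (_root_.stdGaussian k) := by
  refine ⟨WithLp.measurable_ofLp 2 _, ?_⟩
  rw [stdGaussian_eq_pi, ← ProbabilityTheory.map_pi_eq_stdGaussian,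
    Measure.map_map (WithLp.measurable_ofLp 2 _) (WithLp.measurable_toLp 2 _)]
  exact Measure.map_id

end StandardGaussian

section Coordinates

lemma integral_ofLp {k : ℕ} (f : (Fin k → ℝ) → ℝ) :
    ∫ x, f x.ofLp ∂γ[EuclideanSpace ℝ (Fin k)] = ∫ x, f x ∂_root_.stdGaussian k :=
  (measurePreserving_ofLp k).integral_comp' (f := (MeasurableEquiv.toLp 2 _).symm) f

theorem lintegral_map_mulVec_prod_rpow_le {ι : Type*} [Fintype ι] [DecidableEq ι] {ni : ι → ℕ}
    {r : ℕ} {U : Matrix (Σ i, Fin (ni i)) (Fin r) ℝ} {B : ∀ i, Matrix (Fin (ni i)) (Fin (ni i)) ℝ}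
    {p : ι → ℝ} {f : ∀ i, (Fin (ni i) → ℝ) → ℝ} (hp : ∀ i, 0 < p i)
    (hU : ((diagonal fun q : Σ i, Fin (ni i) => p q.1)⁻¹ - U * Uᵀ).PosSemidef)
    (hUB : ∀ i, U.submatrix (Sigma.mk i) id * (U.submatrix (Sigma.mk i) id)ᵀ + B i * (B i)ᵀ = 1)
    (hf : ∀ i, Integrable (f i) (_root_.stdGaussian (ni i))) (hf0 : ∀ i x, 0 ≤ f i x)
    (hmid : ∀ i x y, f i x ^ 2 ≤ f i (x + B i *ᵥ y) * f i (x - B i *ᵥ y)) :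
    ∫⁻ x, ENNReal.ofReal (∏ i, f i (fun a => x ⟨i, a⟩) ^ p i)
        ∂Measure.map U.mulVec (_root_.stdGaussian r) ≤
      ∏ i, ENNReal.ofReal (∫ y, f i y ∂_root_.stdGaussian (ni i)) ^ p i := by
  calc ∫⁻ x, ENNReal.ofReal (∏ i, f i (fun a => x ⟨i, a⟩) ^ p i)
        ∂Measure.map U.mulVec (_root_.stdGaussian r)
      ≤ ∫⁻ z, ENNReal.ofReal (∏ i, f i (fun a => (U *ᵥ z) ⟨i, a⟩) ^ p i) ∂_root_.stdGaussian r :=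
        lintegral_map_le _ _
    _ ≤ ∫⁻ z, ENNReal.ofReal (prodRpow (fun i => euclideanMap (U.submatrix (Sigma.mk i) id)) p
          (fun i y => f i y.ofLp) z) ∂γ[EuclideanSpace ℝ (Fin r)] := by
        rw [← (measurePreserving_ofLp r).map_eq]
        exact lintegral_map_le _ _
    _ ≤ ENNReal.ofReal (∏ i, (∫ y, f i y.ofLp ∂γ[EuclideanSpace ℝ (Fin (ni i))]) ^ p i) :=
        lintegral_prodRpow_le_of_sq_le_mul (B := fun i => euclideanMap (B i))
          (fun i => (hp i).le) (fun i => norm_sq_adjoint_euclideanMap_add (hUB i))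
          (sum_mul_norm_sq_euclideanMap_submatrix_le hp hU)
          (fun i => (measurePreserving_ofLp (ni i)).integrable_comp_of_integrable (hf i))
          (fun i _ => hf0 i _) fun i x y => hmid i x.ofLp y.ofLp
    _ = ∏ i, ENNReal.ofReal (∫ y, f i y ∂_root_.stdGaussian (ni i)) ^ p i := by
        simp only [integral_ofLp]
        rw [ENNReal.ofReal_prod_of_nonneg fun i _ => Real.rpow_nonneg (integral_nonneg (hf0 i)) _]
        exact Finset.prod_congr rfl fun i _ =>
          (ENNReal.ofReal_rpow_of_nonneg (integral_nonneg (hf0 i)) (hp i).le).symm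

end Coordinates

end GaussianBrascampLieb

open GaussianBrascampLieb in
theorem gaussian_vector_brascamp_lieb_general {ι : Type*} [Fintype ι] [DecidableEq ι] {ni : ι → ℕ}
    (T : Matrix (Σ i, Fin (ni i)) (Σ i, Fin (ni i)) ℝ) {r : ℕ}
    (Q : ∀ i, Matrix (Fin (ni i)) (Fin (ni i)) ℝ) (hQ : ∀ i, (Q i).IsHermitian)
    (hTii : ∀ i, ((1 : Matrix (Fin (ni i)) (Fin (ni i)) ℝ) -
      Matrix.of (fun a b : Fin (ni i) => T ⟨i, a⟩ ⟨i, b⟩)).PosSemidef)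
    (hcomp : ∀ i, ((1 : Matrix (Fin (ni i)) (Fin (ni i)) ℝ) -
      Matrix.of (fun a b : Fin (ni i) => T ⟨i, a⟩ ⟨i, b⟩)) * (Q i - 1) = 0)
    (p : ι → ℝ) (hp : ∀ i, 0 < p i)
    (hTP : (((Matrix.diagonal fun q : Σ i, Fin (ni i) => p q.1)⁻¹ :
        Matrix (Σ i, Fin (ni i)) (Σ i, Fin (ni i)) ℝ) - T).PosSemidef)
    (U : Matrix (Σ i, Fin (ni i)) (Fin r) ℝ) (hU : U * Uᵀ = T)
    (f : ∀ i, (Fin (ni i) → ℝ) → ℝ)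
    (hfint : ∀ i, Integrable (f i) (stdGaussian (ni i)))
    (hflc : ∀ i, MoreLogConvex (f i) ((2 * Real.pi)⁻¹ • (Q i - 1))) :
    (∫⁻ x, ENNReal.ofReal (∏ i, f i (fun a => x ⟨i, a⟩) ^ p i)
        ∂Measure.map U.mulVec (stdGaussian r)) ≤
      ∏ i, ENNReal.ofReal (∫ y, f i y ∂stdGaussian (ni i)) ^ p i := by
  subst hU
  have hQ1 (i : ι) : (Q i - 1).IsHermitian := (hQ i).sub isHermitian_one
  choose B hB hQB using fun i =>
    exists_mul_conjTranspose_eq_and_mul_eq_zero (hTii i) (hQ1 i) (hcomp i)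
  have hUB (i : ι) : U.submatrix (Sigma.mk i) id * (U.submatrix (Sigma.mk i) id)ᵀ +
      B i * (B i)ᵀ = 1 := by
    rw [← conjTranspose_eq_transpose_of_trivial (B i), hB]
    exact add_sub_cancel _ _
  refine lintegral_map_mulVec_prod_rpow_le hp hTP hUB hfint
    (fun i => nonneg_of_moreLogConvex (hflc i)) fun i x y =>
      sq_le_mul_of_moreLogConvex ((hQ1 i).smul (.all _)) (hflc i) ?_ x
  rw [smul_mulVec, mulVec_mulVec, hQB, zero_mulVec, smul_zero]

/-- Brascamp–Lieb inequality for jointly Gaussian random vectors with covariance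
dominated by `P⁻¹`. -/
theorem gaussian_vector_brascamp_lieb
    {m : ℕ} (hm : 1 ≤ m) {ni : Fin m → ℕ} (hni_pos : ∀ i, 0 < ni i)
    (T : Matrix (Σ i : Fin m, Fin (ni i)) (Σ i : Fin m, Fin (ni i)) ℝ)
    (hT : T.PosSemidef) {r : ℕ} (hrank : T.rank = r)
    (Q : ∀ i, Matrix (Fin (ni i)) (Fin (ni i)) ℝ)
    (hQ1 : ∀ i, (Q i - 1).PosSemidef)
    (hTii : ∀ i, ((1 : Matrix (Fin (ni i)) (Fin (ni i)) ℝ) -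
      Matrix.of (fun a b : Fin (ni i) => T ⟨i, a⟩ ⟨i, b⟩)).PosSemidef)
    (hcomp : ∀ i, ((1 : Matrix (Fin (ni i)) (Fin (ni i)) ℝ) -
      Matrix.of (fun a b : Fin (ni i) => T ⟨i, a⟩ ⟨i, b⟩)) * (Q i - 1) = 0)
    (p : Fin m → ℝ) (hp : ∀ i, 0 < p i)
    (hTP : (((Matrix.diagonal fun q : Σ i : Fin m, Fin (ni i) => p q.1)⁻¹ :
        Matrix (Σ i : Fin m, Fin (ni i)) (Σ i : Fin m, Fin (ni i)) ℝ) - T).PosSemidef)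
    (U : Matrix (Σ i : Fin m, Fin (ni i)) (Fin r) ℝ) (hU : U * Uᵀ = T)
    (f : ∀ i, (Fin (ni i) → ℝ) → ℝ)
    (hf0 : ∀ i x, 0 ≤ f i x)
    (hfint : ∀ i, Integrable (f i) (stdGaussian (ni i)))
    (hflc : ∀ i, MoreLogConvex (f i) ((2 * Real.pi)⁻¹ • (Q i - 1))) :
    (∫⁻ x, ENNReal.ofReal (∏ i, f i (fun a => x ⟨i, a⟩) ^ p i)
        ∂ (Measure.map U.mulVec (stdGaussian r))) ≤
      ∏ i, ENNReal.ofReal (∫ y, f i y ∂ stdGaussian (ni i)) ^ p i :=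
  gaussian_vector_brascamp_lieb_general T Q
    (fun i => by simpa using (hQ1 i).1.add isHermitian_one) hTii hcomp p hp hTP U hU f hfint hflc
end
end

section
/- Let dμ = e^{−V} dx and dν = e^{−W} dx be probability measures on ℝⁿ with V : ℝⁿ → ℝ finite everywhere (so μ is supported on all of ℝⁿ), and suppose there exist symmetric positive definite n × n matrices A and B such that x ↦ ½⟨Ax,x⟩ − V(x) is convex (i.e. ∇²V ≤ A) and x ↦ W(x) − ½⟨Bx,x⟩ is convex (i.e. ∇²W ≥ B). Let Φ : ℝⁿ → ℝ be a differentiable convex function whose gradient ∇Φ pushes μ forward to ν (the Brenier map). Then x ↦ ½⟨A^{1/2}(A^{1/2} B A^{1/2})^{-1/2} A^{1/2} x, x⟩ − Φ(x) is convex, i.e. ∇²Φ ≤ A^{1/2}(A^{1/2} B A^{1/2})^{-1/2} A^{1/2}. -/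
open MeasureTheory Matrix
open scoped ENNReal

noncomputable section

/-- The gradient of a function on `ℝⁿ`, as a vector of partial derivatives. -/
def gradVec {n : ℕ} (Φ : (Fin n → ℝ) → ℝ) (x : Fin n → ℝ) : Fin n → ℝ :=
  fun i => fderiv ℝ Φ x (Pi.single i 1)

/-
Put `G = A^{1/2} (A^{1/2} B A^{1/2})^{-1/2} A^{1/2}`, so that `G B G = A`, and let `T = ∇Φ`. For
fixed `x`, let `h` maximize `(Φ (x + h) + Φ (x - h)) / 2` minus a convex function of `⟨G h, h⟩`
with slope more than `1 / 2`. Optimality says that `(T (x + h) - T (x - h)) / 2 = t G h` with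
`t > 1` unless `h = 0`. As a function of `x` the maximum value is a maximum of convex functions, so
`S x = (T (x + h) + T (x - h)) / 2` is a selection of its subgradient and `S + ε id` is injective.
Midpoint concavity of `log det` and the Monge-Ampère equation for `T` at `x ± h` bound the Jacobian
of `S` from below; with the curvature bounds this shows that `e^{-V}` is at most the pull-back of
the density `e^{-W}` under `S`, strictly where `h ≠ 0`. The total masses agree, hence `h = 0` almost
everywhere, which bounds the second differences of `Φ` by those of the quadratic form of `G`. To
avoid differentiating a merely measurable choice of `h`, only finitely many candidates `h` are
allowed at a time, and Fatou's lemma passes to the limit.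
-/

open Filter Set
open scoped Topology

section Determinant

variable {ι : Type*} [Fintype ι]

open scoped MatrixOrder in
lemma exists_simultaneous_congruence {P Q : Matrix ι ι ℝ}
    (hP : P.PosDef) (hQ : Q.PosSemidef) :
    ∃ C K : Matrix ι ι ℝ, P = Cᴴ * C ∧ K.PosSemidef ∧ Q = Cᴴ * K * C := by
  classical
  obtain ⟨C, hC⟩ := CStarAlgebra.nonneg_iff_eq_star_mul_self.mp hP.posSemidef.nonneg
  rw [star_eq_conjTranspose] at hC
  have hCunit : IsUnit C := isUnit_of_mul_isUnit_right (hC ▸ hP.isUnit)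
  have hinv : C⁻¹ * C = 1 := nonsing_inv_mul C ((isUnit_iff_isUnit_det C).mp hCunit)
  have hinv' : Cᴴ * (C⁻¹)ᴴ = 1 := by rw [← conjTranspose_mul, hinv, conjTranspose_one]
  refine ⟨C, (C⁻¹)ᴴ * Q * C⁻¹, hC, hQ.conjTranspose_mul_mul_same _, ?_⟩
  calc Q = (Cᴴ * (C⁻¹)ᴴ) * Q * (C⁻¹ * C) := by rw [hinv, hinv', Matrix.one_mul, Matrix.mul_one]
    _ = Cᴴ * ((C⁻¹)ᴴ * Q * C⁻¹) * C := by simp only [Matrix.mul_assoc]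

variable [DecidableEq ι]

lemma det_one_add_eq_prod_one_add_eigenvalues {K : Matrix ι ι ℝ} (hK : K.IsHermitian) :
    (1 + K).det = ∏ i, (1 + hK.eigenvalues i) := by
  have hchar : (scalar ι (-1) - K).det = ∏ i, (-1 - hK.eigenvalues i) := by
    rw [← eval_charpoly, hK.charpoly_eq, Polynomial.eval_prod]
    simp
  have hneg : 1 + K = -(scalar ι (-1) - K) := by rw [map_neg, map_one]; abel
  rw [hneg, det_neg, hchar, ← Finset.card_univ, ← Finset.prod_const, ← Finset.prod_mul_distrib]
  exact Finset.prod_congr rfl fun i _ => by ring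

lemma det_le_det_add {P Q : Matrix ι ι ℝ} (hP : P.PosSemidef) (hQ : Q.PosSemidef) :
    P.det ≤ (P + Q).det := by
  by_cases hdet : P.det = 0
  · exact hdet ▸ (hP.add hQ).det_nonneg
  have hP' : P.PosDef := hP.posDef_iff_det_ne_zero.mpr hdet
  obtain ⟨C, K, rfl, hK, rfl⟩ := exists_simultaneous_congruence hP' hQ
  have hfactor : Cᴴ * C + Cᴴ * K * C = Cᴴ * (1 + K) * C := by noncomm_ring
  have hone : 1 ≤ (1 + K).det := by
    rw [det_one_add_eq_prod_one_add_eigenvalues hK.1]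
    exact Finset.one_le_prod fun i _ => le_add_of_nonneg_right (hK.eigenvalues_nonneg i)
  calc (Cᴴ * C).det ≤ (Cᴴ * C).det * (1 + K).det := le_mul_of_one_le_right hP.det_nonneg hone
    _ = (Cᴴ * C + Cᴴ * K * C).det := by rw [hfactor]; simp only [det_mul]; ring

lemma det_mul_det_le_sq_det_midpoint {P Q : Matrix ι ι ℝ} (hP : P.PosSemidef)
    (hQ : Q.PosSemidef) : P.det * Q.det ≤ ((2 : ℝ)⁻¹ • (P + Q)).det ^ 2 := by
  by_cases hdet : P.det = 0
  · rw [hdet, zero_mul]; positivity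
  have hP' : P.PosDef := hP.posDef_iff_det_ne_zero.mpr hdet
  obtain ⟨C, K, rfl, hK, rfl⟩ := exists_simultaneous_congruence hP' hQ
  have hfactor : Cᴴ * C + Cᴴ * K * C = Cᴴ * (1 + K) * C := by noncomm_ring
  have hamgm : K.det ≤ ((2 : ℝ)⁻¹ ^ Fintype.card ι * (1 + K).det) ^ 2 := by
    rw [det_one_add_eq_prod_one_add_eigenvalues hK.1, hK.1.det_eq_prod_eigenvalues,
      ← Finset.card_univ, ← Finset.prod_const, ← Finset.prod_mul_distrib, ← Finset.prod_pow]
    refine Finset.prod_le_prod (fun i _ => hK.eigenvalues_nonneg i) fun i _ => ?_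
    rw [RCLike.ofReal_real_eq_id, id_eq]
    linarith [sq_nonneg (1 - hK.1.eigenvalues i)]
  calc (Cᴴ * C).det * (Cᴴ * K * C).det = (Cᴴ * C).det ^ 2 * K.det := by
        simp only [det_mul]; ring
    _ ≤ (Cᴴ * C).det ^ 2 * ((2 : ℝ)⁻¹ ^ Fintype.card ι * (1 + K).det) ^ 2 := by gcongr
    _ = ((2 : ℝ)⁻¹ • (Cᴴ * C + Cᴴ * K * C)).det ^ 2 := by
        rw [hfactor, det_smul]; simp only [det_mul]; ring

lemma det_mul_det_le_sq_det_midpoint_add_smul_one {P Q : Matrix ι ι ℝ} (hP : P.PosSemidef)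
    (hQ : Q.PosSemidef) {ε : ℝ} (hε : 0 ≤ ε) :
    P.det * Q.det ≤ ((2 : ℝ)⁻¹ • (P + Q) + ε • 1).det ^ 2 := by
  have hM : ((2 : ℝ)⁻¹ • (P + Q)).PosSemidef := (hP.add hQ).smul (by norm_num)
  calc P.det * Q.det ≤ ((2 : ℝ)⁻¹ • (P + Q)).det ^ 2 := det_mul_det_le_sq_det_midpoint hP hQ
    _ ≤ ((2 : ℝ)⁻¹ • (P + Q) + ε • 1).det ^ 2 :=
        pow_le_pow_left₀ hM.det_nonneg (det_le_det_add hM (PosSemidef.one.smul hε)) 2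

end Determinant

section Convex

variable {E : Type*} [NormedAddCommGroup E] [NormedSpace ℝ E] {f : E → ℝ}

lemma add_fderiv_apply_sub_le {s : Set E} {x y : E} (hf : ConvexOn ℝ s f) (hx : x ∈ s)
    (hy : y ∈ s) (hd : DifferentiableAt ℝ f x) : f x + fderiv ℝ f x (y - x) ≤ f y := by
  have hline : HasDerivAt (f ∘ AffineMap.lineMap x y) (fderiv ℝ f x (y - x)) (0 : ℝ) :=
    HasFDerivAt.comp_hasDerivAt _ (by simpa using hd.hasFDerivAt) AffineMap.hasDerivAt_lineMap
  have hslope := (hf.comp_affineMap (AffineMap.lineMap x y)).le_slope_of_hasDerivAt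
    (by simpa using hx) (by simpa using hy) zero_lt_one hline
  simp only [slope_def_field, Function.comp_apply, AffineMap.lineMap_apply_zero,
    AffineMap.lineMap_apply_one, sub_zero, div_one] at hslope
  linarith

lemma fderiv_sub_fderiv_apply_sub_nonneg (hf : ConvexOn ℝ univ f) (hd : Differentiable ℝ f)
    (x y : E) : 0 ≤ (fderiv ℝ f y - fderiv ℝ f x) (y - x) := by
  have hxy := add_fderiv_apply_sub_le hf (mem_univ x) (mem_univ y) (hd x)
  have hyx := add_fderiv_apply_sub_le hf (mem_univ y) (mem_univ x) (hd y)
  rw [← neg_sub y x, map_neg] at hyx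
  rw [_root_.sub_apply]
  linarith

lemma upperSemicontinuous_fderiv_apply (hf : ConvexOn ℝ univ f) (hd : Differentiable ℝ f)
    (v : E) : UpperSemicontinuous fun x => fderiv ℝ f x v := by
  intro x a ha
  have hline : HasDerivAt (fun t : ℝ => f (x + t • v)) (fderiv ℝ f x v) 0 :=
    (hd x).hasFDerivAt.hasLineDerivAt v
  obtain ⟨t, hta, ht : 0 < t⟩ :=
    (((hasDerivAt_iff_tendsto_slope_zero.mp hline).eventually_lt_const ha).filter_mono
      (nhdsGT_le_nhdsNE 0) |>.and self_mem_nhdsWithin).exists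
  simp only [zero_add, zero_smul, add_zero, smul_eq_mul] at hta
  have hcont : Continuous fun z => t⁻¹ * (f (z + t • v) - f z) := by
    have := hd.continuous
    fun_prop
  filter_upwards [hcont.continuousAt.eventually_lt_const hta] with z hz
  refine lt_of_le_of_lt ?_ hz
  have hsub := add_fderiv_apply_sub_le hf (mem_univ z) (mem_univ (z + t • v)) (hd z)
  rw [add_sub_cancel_left, map_smul, smul_eq_mul] at hsub
  rw [le_inv_mul_iff₀ ht]
  linarith

lemma continuous_fderiv_apply_of_convexOn (hf : ConvexOn ℝ univ f) (hd : Differentiable ℝ f)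
    (v : E) : Continuous fun x => fderiv ℝ f x v := by
  refine continuous_iff_lower_upperSemicontinuous.mpr
    ⟨fun x a ha => ?_, upperSemicontinuous_fderiv_apply hf hd v⟩
  filter_upwards [upperSemicontinuous_fderiv_apply hf hd (-v) x (-a) (by simpa using ha)] with z hz
  simpa using hz

lemma second_fderiv_apply_self_nonneg (hf : ConvexOn ℝ univ f) (hd : Differentiable ℝ f)
    {f'' : E →L[ℝ] E →L[ℝ] ℝ} {x : E} (hf'' : HasFDerivAt (fderiv ℝ f) f'' x) (v : E) :
    0 ≤ f'' v v := by
  have hmono : Monotone fun t : ℝ => fderiv ℝ f (x + t • v) v := by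
    refine monotone_iff_forall_lt.mpr fun s t hst => ?_
    have h := fderiv_sub_fderiv_apply_sub_nonneg hf hd (x + s • v) (x + t • v)
    rw [add_sub_add_left_eq_sub, ← sub_smul, map_smul, smul_eq_mul,
      mul_nonneg_iff_of_pos_left (sub_pos.mpr hst)] at h
    exact sub_nonneg.mp h
  have hderiv : HasDerivAt (fun t : ℝ => fderiv ℝ f (x + t • v) v) (f'' v v) 0 :=
    (ContinuousLinearMap.apply ℝ ℝ v).hasFDerivAt.comp_hasDerivAt 0 (hf''.hasLineDerivAt v)
  exact hderiv.nonneg_of_monotone hmono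

end Convex

section SymmAverage

/-- The mean of the values of `f` at the two points `x + h` and `x - h`. -/
def symmAverage {E F : Type*} [AddGroup E] [AddCommGroup F] [Module ℝ F] (f : E → F) (h x : E) :
    F :=
  (2 : ℝ)⁻¹ • (f (x + h) + f (x - h))

lemma symmAverage_zero {E F : Type*} [AddGroup E] [AddCommGroup F] [Module ℝ F] (f : E → F)
    (x : E) : symmAverage f 0 x = f x := by
  rw [symmAverage, add_zero, sub_zero]
  module

lemma le_symmAverage_of_convexOn {E : Type*} [AddCommGroup E] [Module ℝ E] {f : E → ℝ}
    (hf : ConvexOn ℝ univ f) (h x : E) : f x ≤ symmAverage f h x := by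
  have hmid := hf.2 (mem_univ (x + h)) (mem_univ (x - h)) (by norm_num : (0 : ℝ) ≤ 2⁻¹)
    (by norm_num : (0 : ℝ) ≤ 2⁻¹) (by norm_num)
  have hx : (2 : ℝ)⁻¹ • (x + h) + (2 : ℝ)⁻¹ • (x - h) = x := by module
  rwa [hx, ← smul_add] at hmid

-- Adding `η r²` makes `φ` strictly midpoint convex, which rules out an interior maximum.
lemma nonpos_on_unitInterval_of_le_symmAverage {φ : ℝ → ℝ} (hφ : Continuous φ)
    (hmid : ∀ k p, φ p ≤ symmAverage φ k p) (h0 : φ 0 ≤ 0) (h1 : φ 1 ≤ 0) {r : ℝ}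
    (hr : r ∈ Icc (0 : ℝ) 1) : φ r ≤ 0 := by
  refine le_of_forall_pos_le_add fun η hη => ?_
  obtain ⟨p, hp, hmax⟩ := isCompact_Icc.exists_isMaxOn (nonempty_Icc.mpr zero_le_one)
    (f := fun s => φ s + η * s ^ 2) (by fun_prop)
  have hend : φ p + η * p ^ 2 ≤ η := by
    rcases eq_or_ne p 0 with rfl | hp0
    · linarith
    rcases eq_or_ne p 1 with rfl | hp1
    · linarith
    obtain ⟨k, hk, hk0, hk1⟩ : ∃ k, 0 < k ∧ k ≤ p ∧ k ≤ 1 - p :=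
      ⟨min p (1 - p), lt_min (hp.1.lt_of_ne' hp0) (sub_pos.mpr (hp.2.lt_of_ne hp1)),
        min_le_left _ _, min_le_right _ _⟩
    have hplus : φ (p + k) + η * (p + k) ^ 2 ≤ φ p + η * p ^ 2 :=
      hmax ⟨by linarith, by linarith⟩
    have hminus : φ (p - k) + η * (p - k) ^ 2 ≤ φ p + η * p ^ 2 :=
      hmax ⟨by linarith, by linarith⟩
    have havg : φ p ≤ 2⁻¹ * (φ (p + k) + φ (p - k)) := hmid k p
    nlinarith [mul_pos hη (pow_pos hk 2)]
  have hle : φ r + η * r ^ 2 ≤ φ p + η * p ^ 2 := hmax hr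
  linarith [mul_nonneg hη.le (sq_nonneg r)]

lemma convexOn_univ_of_le_symmAverage {E : Type*} [AddCommGroup E] [Module ℝ E]
    [TopologicalSpace E] [ContinuousAdd E] [ContinuousSMul ℝ E] {f : E → ℝ} (hf : Continuous f)
    (hmid : ∀ h x, f x ≤ symmAverage f h x) : ConvexOn ℝ univ f := by
  refine ⟨convex_univ, fun x _ y _ a b ha hb hab => ?_⟩
  obtain rfl : a = 1 - b := by linarith
  have hchord := nonpos_on_unitInterval_of_le_symmAverage
    (φ := fun r => f ((1 - r) • x + r • y) - ((1 - r) * f x + r * f y)) (by fun_prop)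
    (fun k p => ?_) (by simp) (by simp) ⟨hb, by linarith⟩
  · exact sub_nonpos.mp hchord
  · have hplus : (1 - (p + k)) • x + (p + k) • y = (1 - p) • x + p • y + k • (y - x) := by module
    have hminus : (1 - (p - k)) • x + (p - k) • y = (1 - p) • x + p • y - k • (y - x) := by module
    have havg := hmid (k • (y - x)) ((1 - p) • x + p • y)
    simp only [symmAverage, smul_eq_mul] at havg ⊢
    rw [hplus, hminus]
    linarith

lemma continuous_symmAverage {X E F : Type*} [TopologicalSpace X] [AddGroup E] [TopologicalSpace E]
    [IsTopologicalAddGroup E] [AddCommGroup F] [Module ℝ F] [TopologicalSpace F] [ContinuousAdd F]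
    [ContinuousConstSMul ℝ F] {f : E → F} (hf : Continuous f) {h x : X → E} (hh : Continuous h)
    (hx : Continuous x) : Continuous fun y => symmAverage f (h y) (x y) := by
  unfold symmAverage
  fun_prop

lemma hasFDerivAt_symmAverage {E F : Type*} [NormedAddCommGroup E] [NormedSpace ℝ E]
    [NormedAddCommGroup F] [NormedSpace ℝ F] {f : E → F} {h x : E}
    (hplus : DifferentiableAt ℝ f (x + h)) (hminus : DifferentiableAt ℝ f (x - h)) :
    HasFDerivAt (symmAverage f h) (symmAverage (fderiv ℝ f) h x) x :=
  (((hasFDerivAt_comp_add_right h).mpr hplus.hasFDerivAt).add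
    ((hasFDerivAt_comp_sub h).mpr hminus.hasFDerivAt)).const_smul _

end SymmAverage

section Gradient

variable {n : ℕ} {Φ : (Fin n → ℝ) → ℝ}

lemma gradVec_dotProduct (Φ : (Fin n → ℝ) → ℝ) (x v : Fin n → ℝ) :
    gradVec Φ x ⬝ᵥ v = fderiv ℝ Φ x v := by
  conv_rhs => rw [pi_eq_sum_univ' v, map_sum]
  exact Finset.sum_congr rfl fun i _ => by rw [map_smul, smul_eq_mul, mul_comm]; rfl

lemma continuous_gradVec_of_convexOn (hΦ : ConvexOn ℝ univ Φ) (hd : Differentiable ℝ Φ) :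
    Continuous (gradVec Φ) :=
  continuous_pi fun i => continuous_fderiv_apply_of_convexOn hΦ hd (Pi.single i 1)

lemma gradVec_monotone (hΦ : ConvexOn ℝ univ Φ) (hd : Differentiable ℝ Φ) (x y : Fin n → ℝ) :
    0 ≤ (gradVec Φ y - gradVec Φ x) ⬝ᵥ (y - x) := by
  have h := fderiv_sub_fderiv_apply_sub_nonneg hΦ hd x y
  rwa [_root_.sub_apply, ← gradVec_dotProduct, ← gradVec_dotProduct, ← sub_dotProduct] at h

lemma exists_hasFDerivAt_fderiv_of_hasFDerivAt_gradVec {x : Fin n → ℝ}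
    {H : (Fin n → ℝ) →L[ℝ] (Fin n → ℝ)} (hH : HasFDerivAt (gradVec Φ) H x) :
    ∃ Φ'' : (Fin n → ℝ) →L[ℝ] (Fin n → ℝ) →L[ℝ] ℝ,
      HasFDerivAt (fderiv ℝ Φ) Φ'' x ∧ ∀ v w, Φ'' v w = H v ⬝ᵥ w := by
  let toDual : (Fin n → ℝ) ≃L[ℝ] (Fin n → ℝ) →L[ℝ] ℝ :=
    ((dotProductEquiv ℝ (Fin n)).trans LinearMap.toContinuousLinearMap).toContinuousLinearEquiv
  have hfderiv : fderiv ℝ Φ = toDual ∘ gradVec Φ := by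
    ext y v
    exact (gradVec_dotProduct Φ y v).symm
  exact ⟨toDual.toContinuousLinearMap ∘L H, hfderiv ▸ toDual.hasFDerivAt.comp x hH, fun v w => rfl⟩

lemma posSemidef_toMatrix'_fderiv_gradVec (hΦ : ConvexOn ℝ univ Φ) (hd : Differentiable ℝ Φ)
    {x : Fin n → ℝ} (hx : DifferentiableAt ℝ (gradVec Φ) x) :
    (LinearMap.toMatrix' (fderiv ℝ (gradVec Φ) x).toLinearMap).PosSemidef := by
  obtain ⟨Φ'', hΦ'', happly⟩ := exists_hasFDerivAt_fderiv_of_hasFDerivAt_gradVec hx.hasFDerivAt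
  refine PosSemidef.of_dotProduct_mulVec_nonneg ?_ fun v => ?_
  · ext i j
    have hsymm := second_derivative_symmetric (fun y => (hd y).hasFDerivAt) hΦ''
      (Pi.single i 1) (Pi.single j 1)
    simpa [happly, LinearMap.toMatrix'_apply] using hsymm
  · have hnonneg := second_fderiv_apply_self_nonneg hΦ hd hΦ'' v
    rwa [star_trivial, ← toLin'_apply, toLin'_toMatrix', dotProduct_comm,
      ContinuousLinearMap.coe_coe, ← happly]

end Gradient

section AeDifferentiable

open Module

variable {E : Type*} [NormedAddCommGroup E] [NormedSpace ℝ E] [FiniteDimensional ℝ E]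
  [MeasurableSpace E] [BorelSpace E] {μ : Measure E} [μ.IsAddHaarMeasure]

lemma addHaar_image_eq_zero_of_lipschitzWith {K : NNReal} {f : E → E} (hf : LipschitzWith K f)
    {s : Set E} (hs : μ s = 0) : μ (f '' s) = 0 := by
  have hμH : (μH[finrank ℝ E] : Measure E) s = 0 :=
    Measure.absolutelyContinuous_isAddHaarMeasure _ μ hs
  refine Measure.absolutelyContinuous_isAddHaarMeasure μ μH[finrank ℝ E] (nonpos_iff_eq_zero.mp ?_)
  calc (μH[finrank ℝ E] : Measure E) (f '' s) ≤ K ^ (finrank ℝ E : ℝ) * μH[finrank ℝ E] s :=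
        hf.hausdorffMeasure_image_le (Nat.cast_nonneg _) s
    _ = 0 := by rw [hμH, mul_zero]

/- The Lipschitz extension `F` of `S⁻¹` is differentiable with invertible derivative outside a set
whose image under `F` is null, and at the other points the inverse function rule applies. -/
lemma ae_differentiableAt_of_antilipschitzWith {K : NNReal} {S : E → E} (hS : Continuous S)
    (hS' : AntilipschitzWith K S) : ∀ᵐ x ∂μ, DifferentiableAt ℝ S x := by
  have hinv : Function.LeftInverse (Function.invFun S) S :=
    Function.leftInverse_invFun hS'.injective
  have hlip : LipschitzOnWith K (Function.invFun S) (range S) :=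
    lipschitzOnWith_iff_restrict.mpr (hS'.to_rightInvOn fun _ hy => Function.invFun_eq hy)
  obtain ⟨F, hF, hFeq⟩ := hlip.extend_finite_dimension
  have hFS : ∀ x, F (S x) = x := fun x => (hFeq (mem_range_self x)).symm.trans (hinv x)
  have hnondiff : μ (F '' {z | ¬ DifferentiableAt ℝ F z}) = 0 :=
    addHaar_image_eq_zero_of_lipschitzWith hF hF.ae_differentiableAt
  have hsingular : μ (F '' {z | DifferentiableAt ℝ F z ∧ (fderiv ℝ F z).det = 0}) = 0 :=
    addHaar_image_eq_zero_of_det_fderivWithin_eq_zero μ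
      (fun z hz => hz.1.hasFDerivAt.hasFDerivWithinAt) fun z hz => hz.2
  filter_upwards [measure_eq_zero_iff_ae_notMem.mp hnondiff,
    measure_eq_zero_iff_ae_notMem.mp hsingular] with x hx hx'
  have hd : DifferentiableAt ℝ F (S x) := by_contra fun h => hx ⟨S x, h, hFS x⟩
  have hdet : (fderiv ℝ F (S x)).det ≠ 0 := fun h => hx' ⟨S x, ⟨hd, h⟩, hFS x⟩
  have hF' : HasFDerivAt F
      ((fderiv ℝ F (S x)).toContinuousLinearEquivOfDetNeZero hdet : E →L[ℝ] E) (S x) := by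
    simpa using hd.hasFDerivAt
  exact (hF'.of_local_left_inverse hS.continuousAt (.of_forall hFS)).differentiableAt

end AeDifferentiable

section Monotone

variable {ι : Type*} [Fintype ι]

lemma sq_norm_le_dotProduct_self (v : ι → ℝ) : ‖v‖ ^ 2 ≤ v ⬝ᵥ v := by
  have hnonneg : 0 ≤ v ⬝ᵥ v := Finset.sum_nonneg fun i _ => mul_self_nonneg (v i)
  refine (Real.le_sqrt (norm_nonneg v) hnonneg).mp ?_
  refine (pi_norm_le_iff_of_nonneg (Real.sqrt_nonneg _)).mpr fun i => Real.le_sqrt_of_sq_le ?_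
  rw [Real.norm_eq_abs, sq_abs, sq]
  exact Finset.single_le_sum (fun j _ => mul_self_nonneg (v j)) (Finset.mem_univ i)

lemma dotProduct_le_card_mul_norm_mul_norm (v w : ι → ℝ) :
    v ⬝ᵥ w ≤ Fintype.card ι * (‖v‖ * ‖w‖) := by
  calc v ⬝ᵥ w ≤ ∑ _i : ι, ‖v‖ * ‖w‖ := Finset.sum_le_sum fun i _ =>
        (Real.le_norm_self _).trans <| (norm_mul_le _ _).trans <|
          mul_le_mul (norm_le_pi_norm v i) (norm_le_pi_norm w i) (norm_nonneg _) (norm_nonneg _)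
    _ = Fintype.card ι * (‖v‖ * ‖w‖) := by
        rw [Finset.sum_const, Finset.card_univ, nsmul_eq_mul]

lemma antilipschitzWith_id_add_of_monotone {T : (ι → ℝ) → ι → ℝ}
    (hT : ∀ x y, 0 ≤ (T y - T x) ⬝ᵥ (y - x)) :
    AntilipschitzWith (Fintype.card ι) fun x => x + T x := by
  refine AntilipschitzWith.of_le_mul_dist fun y x => ?_
  rw [dist_eq_norm, dist_eq_norm, NNReal.coe_natCast]
  rcases (norm_nonneg (y - x)).eq_or_lt with hyx | hyx
  · rw [← hyx]; positivity
  refine le_of_mul_le_mul_right ?_ hyx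
  have hsplit : (y + T y - (x + T x)) ⬝ᵥ (y - x)
      = (y - x) ⬝ᵥ (y - x) + (T y - T x) ⬝ᵥ (y - x) := by
    rw [← add_dotProduct, add_sub_add_comm]
  calc ‖y - x‖ * ‖y - x‖ ≤ (y - x) ⬝ᵥ (y - x) := by
        rw [← sq]; exact sq_norm_le_dotProduct_self _
    _ ≤ (y + T y - (x + T x)) ⬝ᵥ (y - x) := by rw [hsplit]; exact le_add_of_nonneg_right (hT x y)
    _ ≤ Fintype.card ι * (‖y + T y - (x + T x)‖ * ‖y - x‖) :=
        dotProduct_le_card_mul_norm_mul_norm _ _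
    _ = Fintype.card ι * ‖y + T y - (x + T x)‖ * ‖y - x‖ := (mul_assoc _ _ _).symm

lemma ae_differentiableAt_of_monotone {T : (ι → ℝ) → ι → ℝ} (hT : Continuous T)
    (hmono : ∀ x y, 0 ≤ (T y - T x) ⬝ᵥ (y - x)) : ∀ᵐ x, DifferentiableAt ℝ T x := by
  filter_upwards [ae_differentiableAt_of_antilipschitzWith (μ := volume) (by fun_prop)
    (antilipschitzWith_id_add_of_monotone hmono)] with x hx
  simpa using hx.sub differentiableAt_id

end Monotone

section ChangeOfVariables

variable {E : Type*} [NormedAddCommGroup E] [NormedSpace ℝ E] [FiniteDimensional ℝ E]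
  [MeasurableSpace E] [BorelSpace E] {μ : Measure E} [μ.IsAddHaarMeasure]

lemma setLIntegral_image_le_setLIntegral_abs_det_fderiv_mul {s : Set E} (hs : MeasurableSet s)
    {T : E → E} (hT : Measurable T) {T' : E → E →L[ℝ] E}
    (hT' : ∀ x ∈ s, HasFDerivWithinAt T (T' x) s x) {g : E → ℝ≥0∞} (hg : Measurable g) :
    ∫⁻ y in T '' s, g y ∂μ ≤ ∫⁻ x in s, ENNReal.ofReal |(T' x).det| * g (T x) ∂μ := by
  set J : E → ℝ≥0∞ := fun x => ENNReal.ofReal |(T' x).det|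
  have hle : μ.restrict (T '' s) ≤ ((μ.restrict s).withDensity J).map T := by
    refine Measure.le_iff.mpr fun t ht => ?_
    rw [Measure.restrict_apply ht, Measure.map_apply hT ht, withDensity_apply _ (hT ht),
      Measure.restrict_restrict (hT ht), ← image_preimage_inter]
    exact addHaar_image_le_lintegral_abs_det_fderiv μ ((hT ht).inter hs)
      fun x hx => (hT' x hx.2).mono inter_subset_right
  calc ∫⁻ y in T '' s, g y ∂μ ≤ ∫⁻ y, g y ∂((μ.restrict s).withDensity J).map T :=
        lintegral_mono' hle le_rfl
    _ = ∫⁻ x, g (T x) ∂(μ.restrict s).withDensity J := lintegral_map hg hT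
    _ = ∫⁻ x in s, J x * g (T x) ∂μ := lintegral_withDensity_eq_lintegral_mul₀
        (aemeasurable_ofReal_abs_det_fderivWithin μ hs hT') (hg.comp hT).aemeasurable

/-- One half of the Monge–Ampère equation. -/
lemma ae_le_abs_det_fderiv_mul_of_map_le {T : E → E} (hT : Measurable T)
    (hdiff : ∀ᵐ x ∂μ, DifferentiableAt ℝ T x) {f g : E → ℝ≥0∞} (hf : Measurable f)
    (hg : Measurable g) (hmap : (μ.withDensity f).map T ≤ μ.withDensity g) :
    ∀ᵐ x ∂μ, f x ≤ ENNReal.ofReal |(fderiv ℝ T x).det| * g (T x) := by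
  set D : Set E := {x | DifferentiableAt ℝ T x}
  have hD : MeasurableSet D := measurableSet_of_differentiableAt ℝ T
  refine ae_le_of_forall_setLIntegral_le_of_sigmaFinite₀ hf.aemeasurable fun s hs _ => ?_
  have hae : s =ᵐ[μ] (s ∩ D : Set E) := by
    filter_upwards [hdiff] with x hx
    exact propext (and_iff_left hx).symm
  rw [setLIntegral_congr hae, setLIntegral_congr hae]
  calc ∫⁻ x in s ∩ D, f x ∂μ = μ.withDensity f (s ∩ D) := (withDensity_apply f (hs.inter hD)).symm
    _ ≤ (μ.withDensity f).map T (T '' (s ∩ D)) := Measure.le_map_apply_image hT.aemeasurable _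
    _ ≤ μ.withDensity g (T '' (s ∩ D)) := hmap _
    _ = ∫⁻ y in T '' (s ∩ D), g y ∂μ := withDensity_apply' _ _
    _ ≤ ∫⁻ x in s ∩ D, ENNReal.ofReal |(fderiv ℝ T x).det| * g (T x) ∂μ :=
      setLIntegral_image_le_setLIntegral_abs_det_fderiv_mul (hs.inter hD) hT
        (fun x hx => hx.2.hasFDerivAt.hasFDerivWithinAt) hg

lemma lintegral_abs_det_fderiv_mul_le_of_piecewise {ι : Type*} [Countable ι] [MeasurableSpace ι]
    [MeasurableSingletonClass ι] {i : E → ι} (hi : Measurable i) {P : ι → E → E}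
    (hdiff : ∀ j, ∀ᵐ x ∂μ, DifferentiableAt ℝ (P j) x)
    (hinj : Function.Injective fun x => P (i x) x) (g : E → ℝ≥0∞) :
    ∫⁻ x, ENNReal.ofReal |(fderiv ℝ (P (i x)) x).det| * g (P (i x) x) ∂μ ≤ ∫⁻ y, g y ∂μ := by
  set s : ι → Set E := fun j => i ⁻¹' {j} ∩ {x | DifferentiableAt ℝ (P j) x}
  have hsm : ∀ j, MeasurableSet (s j) := fun j =>
    (hi (measurableSet_singleton j)).inter (measurableSet_of_differentiableAt ℝ (P j))
  have hderiv : ∀ j, ∀ x ∈ s j, HasFDerivWithinAt (P j) (fderiv ℝ (P j) x) (s j) x :=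
    fun j x hx => hx.2.hasFDerivAt.hasFDerivWithinAt
  have hinjOn : ∀ j, InjOn (P j) (s j) := by
    rintro j x ⟨rfl : i x = j, -⟩ y ⟨hy : i y = i x, -⟩ hxy
    exact hinj (by simpa only [hy] using hxy)
  have hsdisj : Pairwise (Function.onFun Disjoint s) := fun j k hjk =>
    (pairwise_disjoint_fiber i hjk).mono inter_subset_left inter_subset_left
  have himdisj : Pairwise (Function.onFun Disjoint fun j => P j '' s j) := by
    refine fun j k hjk => Set.disjoint_left.mpr ?_
    rintro _ ⟨x, ⟨rfl : i x = j, -⟩, rfl⟩ ⟨y, ⟨rfl : i y = k, -⟩, hyx⟩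
    exact hjk (congrArg i (hinj hyx)).symm
  have hcover : (⋃ j, s j) =ᵐ[μ] univ := by
    refine eventuallyEq_univ.mpr ?_
    filter_upwards [ae_all_iff.mpr hdiff] with x hx
    exact mem_iUnion.mpr ⟨i x, rfl, hx (i x)⟩
  calc ∫⁻ x, ENNReal.ofReal |(fderiv ℝ (P (i x)) x).det| * g (P (i x) x) ∂μ
      = ∑' j, ∫⁻ x in s j, ENNReal.ofReal |(fderiv ℝ (P (i x)) x).det| * g (P (i x) x) ∂μ := by
        rw [← lintegral_iUnion hsm hsdisj, setLIntegral_congr hcover, setLIntegral_univ]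
    _ = ∑' j, ∫⁻ x in s j, ENNReal.ofReal |(fderiv ℝ (P j) x).det| * g (P j x) ∂μ :=
        tsum_congr fun j => setLIntegral_congr_fun (hsm j) (by rintro x ⟨rfl : i x = j, -⟩; rfl)
    _ = ∑' j, ∫⁻ y in P j '' s j, g y ∂μ := tsum_congr fun j =>
        (lintegral_image_eq_lintegral_abs_det_fderiv_mul μ (hsm j) (hderiv j) (hinjOn j) g).symm
    _ = ∫⁻ y in ⋃ j, P j '' s j, g y ∂μ := (lintegral_iUnion
        (fun j => measurable_image_of_fderivWithin (hsm j) (hderiv j) (hinjOn j)) himdisj g).symm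
    _ ≤ ∫⁻ y, g y ∂μ := setLIntegral_le_lintegral _ _

end ChangeOfVariables

section Selection

lemma exists_measurable_argmax {α β : Type*} [MeasurableSpace α] [LinearOrder β]
    [TopologicalSpace β] [OrderClosedTopology β] [SecondCountableTopology β] [MeasurableSpace β]
    [OpensMeasurableSpace β] {u : ℕ → α → β} (hu : ∀ j, Measurable (u j)) (N : ℕ) :
    ∃ i : α → ℕ, Measurable i ∧ ∀ x, i x ≤ N ∧ ∀ j ≤ N, u j x ≤ u (i x) x := by
  classical
  have hex : ∀ x, ∃ i, i ≤ N ∧ ∀ j ≤ N, u j x ≤ u i x := fun x => by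
    obtain ⟨i, hi, hmax⟩ := (Finset.Iic N).exists_max_image (fun j => u j x) Finset.nonempty_Iic
    exact ⟨i, Finset.mem_Iic.mp hi, fun j hj => hmax j (Finset.mem_Iic.mpr hj)⟩
  refine ⟨fun x => Nat.find (hex x), measurable_find hex fun i => ?_,
    fun x => Nat.find_spec (hex x)⟩
  simp only [ofPred_and, ofPred_forall]
  exact (MeasurableSet.const _).inter
    (.iInter fun j => .iInter fun _ => measurableSet_le (hu j) (hu i))

variable {ι κ : Type*} [Fintype ι]

lemma selected_subgradient_monotone {u : κ → (ι → ℝ) → ℝ} {P : κ → (ι → ℝ) → ι → ℝ}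
    (hP : ∀ j x y, u j x + P j x ⬝ᵥ (y - x) ≤ u j y) {i : (ι → ℝ) → κ}
    (hi : ∀ x y, u (i x) y ≤ u (i y) y) (x y : ι → ℝ) :
    0 ≤ (P (i y) y - P (i x) x) ⬝ᵥ (y - x) := by
  have hxy := (hP (i x) x y).trans (hi x y)
  have hyx := (hP (i y) y x).trans (hi y x)
  rw [← neg_sub y x, dotProduct_neg] at hyx
  rw [sub_dotProduct]
  linarith

lemma injective_add_smul_of_monotone {T : (ι → ℝ) → ι → ℝ}
    (hT : ∀ x y, 0 ≤ (T y - T x) ⬝ᵥ (y - x)) {ε : ℝ} (hε : 0 < ε) :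
    Function.Injective fun x => T x + ε • x := by
  intro x y (hxy : T x + ε • x = T y + ε • y)
  have hdiff : T y - T x = -(ε • (y - x)) := by
    rw [smul_sub]; linear_combination -hxy
  have hle := hT x y
  rw [hdiff, neg_dotProduct, smul_dotProduct, smul_eq_mul, neg_nonneg,
    mul_nonpos_iff_pos_imp_nonpos] at hle
  have hzero : (y - x) ⬝ᵥ (y - x) = 0 :=
    le_antisymm (hle.1 hε) (Finset.sum_nonneg fun i _ => mul_self_nonneg ((y - x) i))
  exact (sub_eq_zero.mp (dotProduct_self_eq_zero.mp hzero)).symm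

end Selection

section Brenier

/-- The measure `e^{-V} dx` on `ℝⁿ`; no normalization is imposed on `V`. -/
def gibbsMeasure {n : ℕ} (V : (Fin n → ℝ) → ℝ) : Measure (Fin n → ℝ) :=
  volume.withDensity fun x => ENNReal.ofReal (Real.exp (-V x))

/-- `Φ` is a differentiable Brenier potential between `e^{-V} dx` and `e^{-W} dx`: a convex
function whose gradient transports the first measure to the second. -/
structure IsBrenierPotential {n : ℕ} (V W Φ : (Fin n → ℝ) → ℝ) : Prop where
  convexOn : ConvexOn ℝ univ Φ
  differentiable : Differentiable ℝ Φ
  map_gradVec : (gibbsMeasure V).map (gradVec Φ) = gibbsMeasure W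

/-- The logarithm of the lower bound that the Monge–Ampère inequality at the two points `x ± h`
gives for the density, pulled back to `x`, of `e^{-W} dx` under the symmetrized transport map
`x ↦ symmAverage T h x + ε • x`. -/
def symmExponent {n : ℕ} (V W : (Fin n → ℝ) → ℝ) (T : (Fin n → ℝ) → Fin n → ℝ) (ε : ℝ)
    (h x : Fin n → ℝ) : ℝ :=
  symmAverage (fun y => W (T y) - V y) h x - W (symmAverage T h x + ε • x)

variable {n : ℕ} {V W Φ : (Fin n → ℝ) → ℝ}

lemma symmExponent_zero_zero (V W : (Fin n → ℝ) → ℝ) (T : (Fin n → ℝ) → Fin n → ℝ)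
    (x : Fin n → ℝ) : symmExponent V W T 0 0 x = -V x := by
  rw [symmExponent, symmAverage_zero, symmAverage_zero, zero_smul, add_zero, sub_sub_cancel_left]

lemma continuous_symmExponent {X : Type*} [TopologicalSpace X] (hV : Continuous V)
    (hW : Continuous W) {T : (Fin n → ℝ) → Fin n → ℝ} (hT : Continuous T) {ε : X → ℝ}
    {h x : X → Fin n → ℝ} (hε : Continuous ε) (hh : Continuous h) (hx : Continuous x) :
    Continuous fun y => symmExponent V W T (ε y) (h y) (x y) :=
  (continuous_symmAverage ((hW.comp hT).sub hV) hh hx).sub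
    (hW.comp ((continuous_symmAverage hT hh hx).add (hε.smul hx)))

lemma hasFDerivAt_symmAverage_gradVec_add_smul {h x : Fin n → ℝ}
    (hplus : DifferentiableAt ℝ (gradVec Φ) (x + h))
    (hminus : DifferentiableAt ℝ (gradVec Φ) (x - h)) (ε : ℝ) :
    HasFDerivAt (fun y => symmAverage (gradVec Φ) h y + ε • y)
      (symmAverage (fderiv ℝ (gradVec Φ)) h x + ε • ContinuousLinearMap.id ℝ _) x :=
  (hasFDerivAt_symmAverage hplus hminus).add ((hasFDerivAt_id x).const_smul ε)

namespace IsBrenierPotential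

lemma continuous_gradVec (hΦ : IsBrenierPotential V W Φ) : Continuous (gradVec Φ) :=
  continuous_gradVec_of_convexOn hΦ.convexOn hΦ.differentiable

lemma gibbsMeasure_univ_eq (hΦ : IsBrenierPotential V W Φ) :
    gibbsMeasure W univ = gibbsMeasure V univ := by
  rw [← hΦ.map_gradVec, Measure.map_apply hΦ.continuous_gradVec.measurable .univ, preimage_univ]

lemma ae_differentiableAt_gradVec (hΦ : IsBrenierPotential V W Φ) :
    ∀ᵐ x, DifferentiableAt ℝ (gradVec Φ) x :=
  ae_differentiableAt_of_monotone hΦ.continuous_gradVec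
    (gradVec_monotone hΦ.convexOn hΦ.differentiable)

lemma ae_exp_sub_le_abs_det (hΦ : IsBrenierPotential V W Φ) (hV : Continuous V)
    (hW : Continuous W) :
    ∀ᵐ x, Real.exp (W (gradVec Φ x) - V x) ≤ |(fderiv ℝ (gradVec Φ) x).det| := by
  filter_upwards [ae_le_abs_det_fderiv_mul_of_map_le hΦ.continuous_gradVec.measurable
    hΦ.ae_differentiableAt_gradVec (by fun_prop) (by fun_prop) hΦ.map_gradVec.le] with x hx
  rw [← ENNReal.ofReal_mul (abs_nonneg _), ENNReal.ofReal_le_ofReal_iff (by positivity),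
    Real.exp_neg (W _), ← div_eq_mul_inv, le_div_iff₀ (Real.exp_pos _), ← Real.exp_add] at hx
  rwa [sub_eq_neg_add]

end IsBrenierPotential

lemma abs_det_mul_abs_det_le_sq_det_symmAverage (hΦ : ConvexOn ℝ univ Φ)
    (hd : Differentiable ℝ Φ) {h x : Fin n → ℝ} (hplus : DifferentiableAt ℝ (gradVec Φ) (x + h))
    (hminus : DifferentiableAt ℝ (gradVec Φ) (x - h)) {ε : ℝ} (hε : 0 ≤ ε) :
    |(fderiv ℝ (gradVec Φ) (x + h)).det| * |(fderiv ℝ (gradVec Φ) (x - h)).det| ≤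
      (symmAverage (fderiv ℝ (gradVec Φ)) h x + ε • ContinuousLinearMap.id ℝ _).det ^ 2 := by
  have hP := posSemidef_toMatrix'_fderiv_gradVec hΦ hd hplus
  have hQ := posSemidef_toMatrix'_fderiv_gradVec hΦ hd hminus
  have hsum : LinearMap.toMatrix' (symmAverage (fderiv ℝ (gradVec Φ)) h x +
        ε • ContinuousLinearMap.id ℝ (Fin n → ℝ)).toLinearMap =
      (2 : ℝ)⁻¹ • (LinearMap.toMatrix' (fderiv ℝ (gradVec Φ) (x + h)).toLinearMap +
        LinearMap.toMatrix' (fderiv ℝ (gradVec Φ) (x - h)).toLinearMap) + ε • 1 := by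
    rw [← LinearMap.toMatrix'_id, ← map_add, ← map_smul, ← map_smul, ← map_add]
    rfl
  simp only [ContinuousLinearMap.det, ← LinearMap.det_toMatrix', hsum]
  rw [abs_of_nonneg hP.det_nonneg, abs_of_nonneg hQ.det_nonneg]
  exact det_mul_det_le_sq_det_midpoint_add_smul_one hP hQ hε

namespace IsBrenierPotential

lemma ae_exp_symmExponent_le (hΦ : IsBrenierPotential V W Φ) (hV : Continuous V)
    (hW : Continuous W) (h : Fin n → ℝ) {ε : ℝ} (hε : 0 ≤ ε) :
    ∀ᵐ x, Real.exp (symmExponent V W (gradVec Φ) ε h x) ≤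
      |(fderiv ℝ (fun y => symmAverage (gradVec Φ) h y + ε • y) x).det| *
        Real.exp (-W (symmAverage (gradVec Φ) h x + ε • x)) := by
  have hplus := (measurePreserving_add_right volume h).quasiMeasurePreserving.ae
    (hΦ.ae_differentiableAt_gradVec.and (hΦ.ae_exp_sub_le_abs_det hV hW))
  have hminus := (measurePreserving_sub_right volume h).quasiMeasurePreserving.ae
    (hΦ.ae_differentiableAt_gradVec.and (hΦ.ae_exp_sub_le_abs_det hV hW))
  filter_upwards [hplus, hminus] with x ⟨hdplus, hJplus⟩ ⟨hdminus, hJminus⟩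
  rw [(hasFDerivAt_symmAverage_gradVec_add_smul hdplus hdminus ε).fderiv, symmExponent,
    sub_eq_add_neg, Real.exp_add]
  refine mul_le_mul_of_nonneg_right ?_ (Real.exp_pos _).le
  set a : (Fin n → ℝ) → ℝ := fun y => W (gradVec Φ y) - V y
  have hsq : Real.exp (symmAverage a h x) ^ 2 ≤
      (symmAverage (fderiv ℝ (gradVec Φ)) h x + ε • ContinuousLinearMap.id ℝ _).det ^ 2 :=
    calc Real.exp (symmAverage a h x) ^ 2 = Real.exp (a (x + h)) * Real.exp (a (x - h)) := by
          rw [sq, ← Real.exp_add, ← Real.exp_add, symmAverage, smul_eq_mul]; ring_nf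
      _ ≤ |(fderiv ℝ (gradVec Φ) (x + h)).det| * |(fderiv ℝ (gradVec Φ) (x - h)).det| :=
          mul_le_mul hJplus hJminus (Real.exp_pos _).le (abs_nonneg _)
      _ ≤ _ := abs_det_mul_abs_det_le_sq_det_symmAverage hΦ.convexOn hΦ.differentiable
          hdplus hdminus hε
  exact (le_abs_self _).trans (sq_le_sq.mp hsq)

lemma injective_selected_symmAverage_gradVec (hΦ : IsBrenierPotential V W Φ)
    {κ : Type*} {d : κ → Fin n → ℝ} {γ : κ → ℝ} {i : (Fin n → ℝ) → κ}
    (hi : ∀ x y, symmAverage Φ (d (i x)) y - γ (i x) ≤ symmAverage Φ (d (i y)) y - γ (i y))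
    {ε : ℝ} (hε : 0 < ε) :
    Function.Injective fun x => symmAverage (gradVec Φ) (d (i x)) x + ε • x := by
  refine injective_add_smul_of_monotone (selected_subgradient_monotone
    (u := fun j x => symmAverage Φ (d j) x - γ j) (P := fun j x => symmAverage (gradVec Φ) (d j) x)
    (fun j x y => ?_) hi) hε
  have hplus := add_fderiv_apply_sub_le hΦ.convexOn (mem_univ _) (mem_univ (y + d j))
    (hΦ.differentiable (x + d j))
  have hminus := add_fderiv_apply_sub_le hΦ.convexOn (mem_univ _) (mem_univ (y - d j))
    (hΦ.differentiable (x - d j))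
  rw [add_sub_add_right_eq_sub, ← gradVec_dotProduct] at hplus
  rw [sub_sub_sub_cancel_right, ← gradVec_dotProduct] at hminus
  simp only [symmAverage, smul_dotProduct, add_dotProduct, smul_eq_mul]
  linarith

lemma lintegral_exp_symmExponent_le (hΦ : IsBrenierPotential V W Φ) (hV : Continuous V)
    (hW : Continuous W) {d : ℕ → Fin n → ℝ} {γ : ℕ → ℝ} {i : (Fin n → ℝ) → ℕ}
    (him : Measurable i)
    (hi : ∀ x y, symmAverage Φ (d (i x)) y - γ (i x) ≤ symmAverage Φ (d (i y)) y - γ (i y))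
    {ε : ℝ} (hε : 0 < ε) :
    ∫⁻ x, ENNReal.ofReal (Real.exp (symmExponent V W (gradVec Φ) ε (d (i x)) x)) ≤
      gibbsMeasure V univ := by
  set P : ℕ → (Fin n → ℝ) → Fin n → ℝ := fun j y => symmAverage (gradVec Φ) (d j) y + ε • y
  have hdiff : ∀ j, ∀ᵐ x, DifferentiableAt ℝ (P j) x := fun j => by
    filter_upwards [(measurePreserving_add_right volume (d j)).quasiMeasurePreserving.ae
      hΦ.ae_differentiableAt_gradVec, (measurePreserving_sub_right volume
      (d j)).quasiMeasurePreserving.ae hΦ.ae_differentiableAt_gradVec] with x hplus hminus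
    exact (hasFDerivAt_symmAverage_gradVec_add_smul hplus hminus ε).differentiableAt
  calc ∫⁻ x, ENNReal.ofReal (Real.exp (symmExponent V W (gradVec Φ) ε (d (i x)) x))
      ≤ ∫⁻ x, ENNReal.ofReal |(fderiv ℝ (P (i x)) x).det| *
          ENNReal.ofReal (Real.exp (-W (P (i x) x))) := by
        refine lintegral_mono_ae ?_
        filter_upwards [ae_all_iff.mpr fun j => hΦ.ae_exp_symmExponent_le hV hW (d j) hε.le]
          with x hx
        rw [← ENNReal.ofReal_mul (abs_nonneg _)]
        exact ENNReal.ofReal_le_ofReal (hx (i x))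
    _ ≤ ∫⁻ y, ENNReal.ofReal (Real.exp (-W y)) :=
        lintegral_abs_det_fderiv_mul_le_of_piecewise him hdiff
          (hΦ.injective_selected_symmAverage_gradVec hi hε) _
    _ = gibbsMeasure W univ := by rw [gibbsMeasure, withDensity_apply _ .univ, setLIntegral_univ]
    _ = gibbsMeasure V univ := hΦ.gibbsMeasure_univ_eq

end IsBrenierPotential

end Brenier

section QuadraticForm

variable {ι : Type*} [Fintype ι] {M : Matrix ι ι ℝ}

@[fun_prop]
lemma continuous_mulVec_dotProduct_self (M : Matrix ι ι ℝ) :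
    Continuous fun x : ι → ℝ => M *ᵥ x ⬝ᵥ x :=
  (continuous_const.matrix_mulVec continuous_id).dotProduct continuous_id

lemma symmAverage_mulVec_dotProduct_self (M : Matrix ι ι ℝ) (h x : ι → ℝ) :
    symmAverage (fun y => M *ᵥ y ⬝ᵥ y) h x = M *ᵥ x ⬝ᵥ x + M *ᵥ h ⬝ᵥ h := by
  simp only [symmAverage, mulVec_add, mulVec_sub, add_dotProduct, sub_dotProduct, dotProduct_add,
    dotProduct_sub, smul_eq_mul]
  ring

lemma mulVec_dotProduct_eq_dotProduct_mulVec_of_isSymm (hM : M.IsSymm) (x y : ι → ℝ) :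
    M *ᵥ x ⬝ᵥ y = x ⬝ᵥ M *ᵥ y := by
  rw [dotProduct_mulVec, ← mulVec_transpose, hM.eq]

lemma mulVec_dotProduct_self_pos (hM : M.PosDef) {x : ι → ℝ} (hx : x ≠ 0) :
    0 < M *ᵥ x ⬝ᵥ x := by
  rw [dotProduct_comm]
  exact hM.dotProduct_mulVec_pos hx

lemma hasLineDerivAt_mulVec_dotProduct_self (hM : M.IsSymm) (x v : ι → ℝ) :
    HasLineDerivAt ℝ (fun y => M *ᵥ y ⬝ᵥ y) (2 * (M *ᵥ x ⬝ᵥ v)) x v := by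
  have hexpand : (fun s : ℝ => M *ᵥ (x + s • v) ⬝ᵥ (x + s • v)) = fun s =>
      M *ᵥ x ⬝ᵥ x + s * (2 * (M *ᵥ x ⬝ᵥ v)) + s ^ 2 * (M *ᵥ v ⬝ᵥ v) := by
    have hcomm : M *ᵥ v ⬝ᵥ x = M *ᵥ x ⬝ᵥ v := by
      rw [mulVec_dotProduct_eq_dotProduct_mulVec_of_isSymm hM, dotProduct_comm]
    ext s
    simp only [mulVec_add, mulVec_smul, add_dotProduct, dotProduct_add, smul_dotProduct,
      dotProduct_smul, smul_eq_mul, hcomm]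
    ring
  rw [HasLineDerivAt, hexpand]
  exact ((((hasDerivAt_id (0 : ℝ)).mul_const _).const_add _).add
    (((hasDerivAt_id (0 : ℝ)).pow 2).mul_const _)).congr_deriv (by simp)

open scoped MatrixOrder in
lemma isCompact_setOf_mulVec_dotProduct_self_le (hM : M.PosDef) (r : ℝ) :
    IsCompact {x : ι → ℝ | M *ᵥ x ⬝ᵥ x ≤ r} := by
  classical
  obtain ⟨C, hC, rfl⟩ := CStarAlgebra.isStrictlyPositive_iff_eq_star_mul_self.mp
    hM.isStrictlyPositive
  obtain ⟨K, -, hK⟩ := C.mulVecLin.exists_antilipschitzWith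
    (LinearMap.ker_eq_bot.mpr (mulVec_injective_of_isUnit hC))
  refine Metric.isCompact_of_isClosed_isBounded
    (isClosed_le (continuous_mulVec_dotProduct_self _) continuous_const)
    ((hK.isBounded_preimage (Metric.isBounded_closedBall (x := 0) (r := √r))).subset
      fun x (hx : _ ≤ r) => ?_)
  rw [mem_preimage, mem_closedBall_zero_iff]
  refine Real.le_sqrt_of_sq_le ((sq_norm_le_dotProduct_self _).trans (le_of_eq_of_le ?_ hx))
  rw [mulVecLin_apply, star_eq_conjTranspose, conjTranspose_eq_transpose_of_trivial,
    ← mulVec_mulVec, mulVec_transpose, ← dotProduct_mulVec]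

end QuadraticForm

section MaximizingSequence

variable {X Y Z : Type*} [TopologicalSpace X] [FirstCountableTopology X] [TopologicalSpace Y]
  [TopologicalSpace Z] {f : X → ℝ} {D : Set X} {e : ℕ → X}

lemma exists_isMaxOn_univ_tendsto_subseq (hf : Continuous f)
    (hcompact : ∀ a, IsCompact {x | a ≤ f x}) (hD : Dense D)
    (he : ∀ d ∈ D, ∀ᶠ N in atTop, f d ≤ f (e N)) :
    ∃ x, IsMaxOn f univ x ∧ ∃ ψ : ℕ → ℕ, StrictMono ψ ∧ Tendsto (e ∘ ψ) atTop (𝓝 x) := by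
  have : Nonempty X := ⟨e 0⟩
  obtain ⟨d, hd⟩ := hD.nonempty
  obtain ⟨x, -, ψ, hψ, hlim⟩ := (hcompact (f d)).tendsto_subseq' (he d hd).frequently
  have hle : D ⊆ {y | f y ≤ f x} := fun y hy =>
    ge_of_tendsto ((hf.tendsto x).comp hlim) (hψ.tendsto_atTop.eventually (he y hy))
  have hclosed : IsClosed {y | f y ≤ f x} := isClosed_le hf continuous_const
  exact ⟨x, fun y _ => hclosed.closure_subset_iff.mpr hle (hD y), ψ, hψ, hlim⟩

lemma exists_isMaxOn_univ_liminf_eq [CompleteLinearOrder Y] [OrderTopology Y]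
    [FirstCountableTopology Y] (hf : Continuous f)
    (hcompact : ∀ a, IsCompact {x | a ≤ f x}) (hD : Dense D)
    (he : ∀ d ∈ D, ∀ᶠ N in atTop, f d ≤ f (e N)) {g : Z → X → Y}
    (hg : Continuous fun p : Z × X => g p.1 p.2) {z : ℕ → Z} {z₀ : Z}
    (hz : Tendsto z atTop (𝓝 z₀)) :
    ∃ x, IsMaxOn f univ x ∧ liminf (fun N => g (z N) (e N)) atTop = g z₀ x := by
  obtain ⟨φ, hφlim, hφ⟩ := exists_seq_tendsto_liminf (f := atTop) (u := fun N => g (z N) (e N))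
  obtain ⟨x, hmax, ψ, hψ, hψlim⟩ := exists_isMaxOn_univ_tendsto_subseq (e := e ∘ φ) hf hcompact hD
    fun d hd => hφ.eventually (he d hd)
  refine ⟨x, hmax, tendsto_nhds_unique (hφlim.comp hψ.tendsto_atTop) ?_⟩
  exact (hg.tendsto (z₀, x)).comp
    (((hz.comp hφ).comp hψ.tendsto_atTop).prodMk_nhds hψlim)

end MaximizingSequence

section Fatou

lemma ae_eq_liminf_of_lintegral_le {α : Type*} [MeasurableSpace α] {μ : Measure α}
    {f : ℕ → α → ℝ≥0∞} {g : α → ℝ≥0∞} (hf : ∀ N, Measurable (f N))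
    (hg : ∫⁻ x, g x ∂μ ≠ ∞) (hle : ∀ x, g x ≤ liminf (fun N => f N x) atTop)
    (hmass : ∀ N, ∫⁻ x, f N x ∂μ ≤ ∫⁻ x, g x ∂μ) :
    g =ᵐ[μ] fun x => liminf (fun N => f N x) atTop := by
  refine ae_eq_of_ae_le_of_lintegral_le (.of_forall hle) hg (Measurable.liminf hf).aemeasurable ?_
  calc ∫⁻ x, liminf (fun N => f N x) atTop ∂μ
      ≤ liminf (fun N => ∫⁻ x, f N x ∂μ) atTop := lintegral_liminf_le hf
    _ ≤ ∫⁻ x, g x ∂μ := liminf_le_of_frequently_le' (.of_forall hmass)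

end Fatou

section Penalization

/-- The penalty `q / (2 (1 - δ q))`, meaningful for `δ q < 1`: it has slope more than `1 / 2` at
every `q > 0`, blows up at `q = 1 / δ`, and converges to `q / 2` as `δ → 0`. -/
def barrier (δ q : ℝ) : ℝ :=
  q / (2 * (1 - δ * q))

lemma hasDerivAt_barrier {δ q : ℝ} (hq : δ * q < 1) :
    HasDerivAt (barrier δ) (2⁻¹ * (1 - δ * q)⁻¹ ^ 2) q := by
  have hne : 1 - δ * q ≠ 0 := (sub_pos.mpr hq).ne'
  have hden : HasDerivAt (fun r => 2 * (1 - δ * r)) (2 * -(δ * 1)) q :=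
    (((hasDerivAt_id q).const_mul δ).const_sub 1).const_mul 2
  refine ((hasDerivAt_id q).div hden (by simpa using hne)).congr_deriv ?_
  simp only [id_eq]
  field_simp
  ring

lemma le_div_of_barrier_le {δ q c : ℝ} (hδ : 0 ≤ δ) (hc : 0 ≤ c) (hq : δ * q < 1)
    (hle : barrier δ q ≤ c) : q ≤ 2 * c / (1 + 2 * c * δ) := by
  rw [barrier, div_le_iff₀ (by linarith)] at hle
  rw [le_div_iff₀ (by positivity)]
  linarith

lemma tendsto_barrier_nhds_zero (q : ℝ) :
    Tendsto (fun δ => barrier δ q) (𝓝 0) (𝓝 (2⁻¹ * q)) := by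
  have hcont : ContinuousAt (fun δ => barrier δ q) 0 :=
    continuousAt_const.div (by fun_prop) (by simp)
  simpa [ContinuousAt, barrier, div_eq_inv_mul] using hcont

/-- The open set of `h` on which the barrier of the quadratic form of `G` is meaningful. -/
def barrierDomain {ι : Type*} [Fintype ι] (G : Matrix ι ι ℝ) (δ : ℝ) : Set (ι → ℝ) :=
  {h | δ * (G *ᵥ h ⬝ᵥ h) < 1}

/-- The symmetric average of `Φ` at `x`, as a function of the displacement `h`, penalized by the
barrier of the quadratic form of `G`. -/
def penalizedAverage {ι : Type*} [Fintype ι] (Φ : (ι → ℝ) → ℝ) (G : Matrix ι ι ℝ) (δ : ℝ)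
    (x h : ι → ℝ) : ℝ :=
  symmAverage Φ h x - barrier δ (G *ᵥ h ⬝ᵥ h)

variable {ι : Type*} [Fintype ι] {Φ : (ι → ℝ) → ℝ} {G : Matrix ι ι ℝ} {δ : ℝ}

lemma isOpen_barrierDomain (G : Matrix ι ι ℝ) (δ : ℝ) : IsOpen (barrierDomain G δ) :=
  isOpen_lt (by fun_prop) continuous_const

lemma zero_mem_barrierDomain (G : Matrix ι ι ℝ) (δ : ℝ) : 0 ∈ barrierDomain G δ := by
  simp [barrierDomain]

lemma penalizedAverage_zero (Φ : (ι → ℝ) → ℝ) (G : Matrix ι ι ℝ) (δ : ℝ) (x : ι → ℝ) :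
    penalizedAverage Φ G δ x 0 = Φ x := by
  rw [penalizedAverage, symmAverage_zero, dotProduct_zero, barrier, zero_div, sub_zero]

lemma continuousOn_penalizedAverage (hΦ : Continuous Φ) (G : Matrix ι ι ℝ) (δ : ℝ) (x : ι → ℝ) :
    ContinuousOn (penalizedAverage Φ G δ x) (barrierDomain G δ) := by
  refine (continuous_symmAverage hΦ continuous_id continuous_const).continuousOn.sub
    (ContinuousOn.div (by fun_prop) (by fun_prop) fun h hh => ?_)
  exact mul_ne_zero two_ne_zero (sub_pos.mpr hh).ne'

lemma isCompact_setOf_le_penalizedAverage (hΦ : Continuous Φ) (hG : G.PosDef) (hδ : 0 < δ)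
    (x : ι → ℝ) (a : ℝ) :
    IsCompact {h : barrierDomain G δ | a ≤ penalizedAverage Φ G δ x h} := by
  have hcont : Continuous fun h => symmAverage Φ h x :=
    continuous_symmAverage hΦ continuous_id continuous_const
  obtain ⟨C, hC⟩ := (isCompact_setOf_mulVec_dotProduct_self_le hG δ⁻¹).bddAbove_image
    hcont.continuousOn
  set c := max (C - a) 0
  have hc : 0 ≤ c := le_max_right _ _
  have hlt : δ * (2 * c / (1 + 2 * c * δ)) < 1 := by
    rw [← mul_div_assoc, div_lt_one (by positivity)]
    linarith
  have hsub : {h | G *ᵥ h ⬝ᵥ h ≤ 2 * c / (1 + 2 * c * δ)} ⊆ barrierDomain G δ := fun h hh =>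
    (mul_le_mul_of_nonneg_left hh.out hδ.le).trans_lt hlt
  have hK : IsCompact ((↑) ⁻¹' {h | G *ᵥ h ⬝ᵥ h ≤ 2 * c / (1 + 2 * c * δ)} :
      Set (barrierDomain G δ)) :=
    Topology.IsInducing.subtypeVal.isCompact_preimage'
      (isCompact_setOf_mulVec_dotProduct_self_le hG _) (by rwa [Subtype.range_coe])
  refine hK.of_isClosed_subset (isClosed_le continuous_const
    (continuousOn_penalizedAverage hΦ G δ x).domRestrict) fun ⟨h, hh⟩ (ha : a ≤ _) => ?_
  have hle : symmAverage Φ h x ≤ C := hC ⟨h, by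
    rw [mem_ofPred_eq, ← one_div, le_div_iff₀' hδ]; exact hh.le, rfl⟩
  refine le_div_of_barrier_le hδ.le hc hh ((?_ : _ ≤ C - a).trans (le_max_left _ _))
  rw [penalizedAverage] at ha
  linarith

end Penalization

section Optimality

variable {n : ℕ} {V W Φ : (Fin n → ℝ) → ℝ} {A B G : Matrix (Fin n) (Fin n) ℝ} {δ : ℝ}
  {h x : Fin n → ℝ}

lemma hasLineDerivAt_symmAverage (hd : Differentiable ℝ Φ) (h x v : Fin n → ℝ) :
    HasLineDerivAt ℝ (fun k => symmAverage Φ k x)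
      ((2 : ℝ)⁻¹ • (gradVec Φ (x + h) - gradVec Φ (x - h)) ⬝ᵥ v) h v := by
  have hplus : HasFDerivAt (fun k => Φ (x + k)) (fderiv ℝ Φ (x + h)) h :=
    (hasFDerivAt_comp_add_left x).mpr (hd _).hasFDerivAt
  have hminus : HasFDerivAt (fun k => Φ (x - k)) (-fderiv ℝ Φ (x - h)) h :=
    (hd _).hasFDerivAt.comp h ((hasFDerivAt_id h).const_sub x) |>.congr_fderiv (by ext; simp)
  refine (((hplus.add hminus).const_smul (2 : ℝ)⁻¹).hasLineDerivAt v).congr_deriv ?_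
  simp [gradVec_dotProduct, sub_eq_add_neg]

lemma half_smul_gradVec_sub_eq_of_isMaxOn (hd : Differentiable ℝ Φ) (hG : G.IsSymm)
    (hh : h ∈ barrierDomain G δ)
    (hmax : IsMaxOn (penalizedAverage Φ G δ x) (barrierDomain G δ) h) :
    (2 : ℝ)⁻¹ • (gradVec Φ (x + h) - gradVec Φ (x - h)) =
      (1 - δ * (G *ᵥ h ⬝ᵥ h))⁻¹ ^ 2 • G *ᵥ h := by
  refine dotProduct_eq _ _ fun v => ?_
  have hbarrier : HasLineDerivAt ℝ (fun k => barrier δ (G *ᵥ k ⬝ᵥ k))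
      (2⁻¹ * (1 - δ * (G *ᵥ h ⬝ᵥ h))⁻¹ ^ 2 * (2 * (G *ᵥ h ⬝ᵥ v))) h v :=
    HasDerivAt.comp (0 : ℝ) (h₂ := barrier δ) (by simpa using hasDerivAt_barrier hh)
      (hasLineDerivAt_mulVec_dotProduct_self hG h v)
  have hnear : ∀ᶠ t : ℝ in 𝓝 0, h + t • v ∈ barrierDomain G δ :=
    (by fun_prop : Continuous fun t : ℝ => h + t • v).continuousAt.eventually_mem
      ((isOpen_barrierDomain G δ).mem_nhds (by simpa using hh))
  have hzero := hmax.hasLineDerivAt_eq_zero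
    (HasDerivAt.sub (hasLineDerivAt_symmAverage hd h x v) hbarrier) hnear
  rw [sub_eq_zero.mp hzero, smul_dotProduct, smul_eq_mul]
  ring

lemma neg_add_le_symmExponent
    (hV : ConvexOn ℝ univ fun x : Fin n → ℝ => (2 : ℝ)⁻¹ * (A *ᵥ x ⬝ᵥ x) - V x)
    (hW : ConvexOn ℝ univ fun x : Fin n → ℝ => W x - (2 : ℝ)⁻¹ * (B *ᵥ x ⬝ᵥ x))
    {T : (Fin n → ℝ) → Fin n → ℝ} {k : Fin n → ℝ}
    (hk : (2 : ℝ)⁻¹ • (T (x + h) - T (x - h)) = k) :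
    -V x + (2 : ℝ)⁻¹ * (B *ᵥ k ⬝ᵥ k - A *ᵥ h ⬝ᵥ h) ≤ symmExponent V W T 0 h x := by
  have hplus : symmAverage T h x + k = T (x + h) := by rw [← hk, symmAverage]; module
  have hminus : symmAverage T h x - k = T (x - h) := by rw [← hk, symmAverage]; module
  have hVle := le_symmAverage_of_convexOn hV h x
  have hWle := le_symmAverage_of_convexOn hW k (symmAverage T h x)
  have hAeq := symmAverage_mulVec_dotProduct_self A h x
  have hBeq := symmAverage_mulVec_dotProduct_self B k (symmAverage T h x)
  simp only [symmExponent, zero_smul, add_zero]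
  generalize symmAverage T h x = p at *
  simp only [symmAverage, smul_eq_mul, hplus, hminus] at *
  linarith

lemma neg_lt_symmExponent_of_isMaxOn
    (hV : ConvexOn ℝ univ fun x : Fin n → ℝ => (2 : ℝ)⁻¹ * (A *ᵥ x ⬝ᵥ x) - V x)
    (hW : ConvexOn ℝ univ fun x : Fin n → ℝ => W x - (2 : ℝ)⁻¹ * (B *ᵥ x ⬝ᵥ x))
    (hA : A.PosDef) (hG : G.PosDef) (hGBG : G * B * G = A) (hd : Differentiable ℝ Φ) (hδ : 0 < δ)
    (hh : h ∈ barrierDomain G δ)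
    (hmax : IsMaxOn (penalizedAverage Φ G δ x) (barrierDomain G δ) h) (hne : h ≠ 0) :
    -V x < symmExponent V W (gradVec Φ) 0 h x := by
  have hGsymm : G.IsSymm := isHermitian_iff_isSymm.mp hG.isHermitian
  set t := (1 - δ * (G *ᵥ h ⬝ᵥ h))⁻¹ ^ 2
  have ht : 1 < t := one_lt_pow₀ ((one_lt_inv₀ (sub_pos.mpr hh)).mpr
    (sub_lt_self _ (mul_pos hδ (mulVec_dotProduct_self_pos hG hne)))) two_ne_zero
  have hcongr : B *ᵥ (t • G *ᵥ h) ⬝ᵥ (t • G *ᵥ h) = t ^ 2 * (A *ᵥ h ⬝ᵥ h) := by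
    rw [mulVec_smul, smul_dotProduct, dotProduct_smul,
      ← mulVec_dotProduct_eq_dotProduct_mulVec_of_isSymm hGsymm, mulVec_mulVec, mulVec_mulVec,
      hGBG, smul_eq_mul, smul_eq_mul, sq, mul_assoc]
  refine lt_of_lt_of_le ?_
    (neg_add_le_symmExponent hV hW (half_smul_gradVec_sub_eq_of_isMaxOn hd hGsymm hh hmax))
  rw [hcongr, ← sub_one_mul]
  have hgain := mul_pos (sub_pos.mpr (one_lt_pow₀ ht two_ne_zero))
    (mulVec_dotProduct_self_pos hA hne)
  linarith

end Optimality

section Contraction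

variable {n : ℕ} {V W Φ : (Fin n → ℝ) → ℝ} {A B G : Matrix (Fin n) (Fin n) ℝ}

lemma measurable_selected_symmExponent (hV : Continuous V) (hW : Continuous W)
    {T : (Fin n → ℝ) → Fin n → ℝ} (hT : Continuous T) (ε : ℝ) (d : ℕ → Fin n → ℝ)
    {i : (Fin n → ℝ) → ℕ} (hi : Measurable i) :
    Measurable fun x => symmExponent V W T ε (d (i x)) x :=
  (measurable_from_prod_countable_right fun j =>
    (continuous_symmExponent hV hW hT continuous_const (continuous_const (y := d j))
      continuous_id).measurable :
    Measurable fun p : ℕ × (Fin n → ℝ) => symmExponent V W T ε (d p.1) p.2).comp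
    (hi.prodMk measurable_id)

namespace IsBrenierPotential

lemma exists_seq_lintegral_le_liminf_eq_exp_symmExponent (hΦ : IsBrenierPotential V W Φ)
    (hV : Continuous V) (hW : Continuous W) (hG : G.PosDef) {δ : ℝ} (hδ : 0 < δ) :
    ∃ f : ℕ → (Fin n → ℝ) → ℝ≥0∞, (∀ N, Measurable (f N)) ∧
      (∀ N, ∫⁻ x, f N x ≤ gibbsMeasure V univ) ∧
      ∀ x, ∃ h ∈ barrierDomain G δ, IsMaxOn (penalizedAverage Φ G δ x) (barrierDomain G δ) h ∧
        liminf (fun N => f N x) atTop =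
          ENNReal.ofReal (Real.exp (symmExponent V W (gradVec Φ) 0 h x)) := by
  have : Nonempty (barrierDomain G δ) := ⟨⟨0, zero_mem_barrierDomain G δ⟩⟩
  let d : ℕ → barrierDomain G δ := TopologicalSpace.denseSeq _
  choose i him hi using fun N => exists_measurable_argmax
    (u := fun j x => penalizedAverage Φ G δ x (d j)) (fun j => ((continuous_symmAverage
      hΦ.differentiable.continuous continuous_const continuous_id).sub
        continuous_const).measurable) N
  have hT := hΦ.continuous_gradVec
  refine ⟨fun N x => ENNReal.ofReal (Real.exp
    (symmExponent V W (gradVec Φ) (1 / (N + 1)) (d (i N x)) x)), fun N => ?_, fun N => ?_,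
    fun x => ?_⟩
  · exact (measurable_selected_symmExponent hV hW hT _ (fun j => d j) (him N)).exp.ennreal_ofReal
  · exact hΦ.lintegral_exp_symmExponent_le hV hW (d := fun j => d j)
      (γ := fun j => barrier δ (G *ᵥ d j ⬝ᵥ d j)) (him N) (fun x y => (hi N y).2 (i N x) (hi N x).1)
      Nat.one_div_pos_of_nat
  · obtain ⟨h, hmax, hlim⟩ := exists_isMaxOn_univ_liminf_eq
      (g := fun ε (h : barrierDomain G δ) =>
        ENNReal.ofReal (Real.exp (symmExponent V W (gradVec Φ) ε h x)))
      (continuousOn_penalizedAverage hΦ.differentiable.continuous G δ x).domRestrict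
      (isCompact_setOf_le_penalizedAverage hΦ.differentiable.continuous hG hδ x)
      (TopologicalSpace.denseRange_denseSeq _)
      (e := fun N => d (i N x)) (forall_mem_range.mpr fun j =>
        (eventually_ge_atTop j).mono fun N hN => (hi N x).2 j hN)
      (ENNReal.continuous_ofReal.comp (Real.continuous_exp.comp (continuous_symmExponent hV hW hT
        continuous_fst (continuous_subtype_val.comp continuous_snd) continuous_const)))
      tendsto_one_div_add_atTop_nhds_zero_nat
    exact ⟨h, h.2, fun k hk => hmax (mem_univ ⟨k, hk⟩), hlim⟩

lemma ae_isMaxOn_penalizedAverage_zero (hΦ : IsBrenierPotential V W Φ)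
    [IsFiniteMeasure (gibbsMeasure V)] (hVc : Continuous V) (hWc : Continuous W)
    (hV : ConvexOn ℝ univ fun x : Fin n → ℝ => (2 : ℝ)⁻¹ * (A *ᵥ x ⬝ᵥ x) - V x)
    (hW : ConvexOn ℝ univ fun x : Fin n → ℝ => W x - (2 : ℝ)⁻¹ * (B *ᵥ x ⬝ᵥ x))
    (hA : A.PosDef) (hG : G.PosDef) (hGBG : G * B * G = A) {δ : ℝ} (hδ : 0 < δ) :
    ∀ᵐ x, IsMaxOn (penalizedAverage Φ G δ x) (barrierDomain G δ) 0 := by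
  obtain ⟨f, hf, hmass, hlim⟩ :=
    hΦ.exists_seq_lintegral_le_liminf_eq_exp_symmExponent hVc hWc hG hδ
  have hgibbs : ∫⁻ x, ENNReal.ofReal (Real.exp (-V x)) = gibbsMeasure V univ := by
    rw [gibbsMeasure, withDensity_apply _ .univ, setLIntegral_univ]
  have hle : ∀ x, ENNReal.ofReal (Real.exp (-V x)) ≤ liminf (fun N => f N x) atTop := fun x => by
    obtain ⟨h, hh, hmax, heq⟩ := hlim x
    rw [heq]
    refine ENNReal.ofReal_le_ofReal (Real.exp_le_exp.mpr ?_)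
    rcases eq_or_ne h 0 with rfl | hne
    · rw [symmExponent_zero_zero]
    · exact (neg_lt_symmExponent_of_isMaxOn hV hW hA hG hGBG hΦ.differentiable hδ hh hmax hne).le
  filter_upwards [ae_eq_liminf_of_lintegral_le hf (hgibbs ▸ measure_ne_top _ _) hle
    fun N => (hmass N).trans_eq hgibbs.symm] with x hx
  obtain ⟨h, hh, hmax, heq⟩ := hlim x
  obtain rfl : h = 0 := by
    by_contra hne
    refine (neg_lt_symmExponent_of_isMaxOn hV hW hA hG hGBG hΦ.differentiable hδ hh hmax hne).ne ?_
    rwa [heq, ENNReal.ofReal_eq_ofReal_iff (by positivity) (by positivity), Real.exp_eq_exp] at hx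
  exact hmax

lemma symmAverage_le_add (hΦ : IsBrenierPotential V W Φ)
    [IsFiniteMeasure (gibbsMeasure V)] (hVc : Continuous V) (hWc : Continuous W)
    (hV : ConvexOn ℝ univ fun x : Fin n → ℝ => (2 : ℝ)⁻¹ * (A *ᵥ x ⬝ᵥ x) - V x)
    (hW : ConvexOn ℝ univ fun x : Fin n → ℝ => W x - (2 : ℝ)⁻¹ * (B *ᵥ x ⬝ᵥ x))
    (hA : A.PosDef) (hG : G.PosDef) (hGBG : G * B * G = A) (h x : Fin n → ℝ) :
    symmAverage Φ h x ≤ Φ x + (2 : ℝ)⁻¹ * (G *ᵥ h ⬝ᵥ h) := by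
  have hbarrier : ∀ δ > 0, h ∈ barrierDomain G δ →
      symmAverage Φ h x ≤ Φ x + barrier δ (G *ᵥ h ⬝ᵥ h) := fun δ hδ hh => by
    have hΦc := hΦ.differentiable.continuous
    have hclosed : IsClosed {y | symmAverage Φ h y ≤ Φ y + barrier δ (G *ᵥ h ⬝ᵥ h)} :=
      isClosed_le (continuous_symmAverage hΦc continuous_const continuous_id)
        (hΦc.add continuous_const)
    refine hclosed.closure_subset (Measure.dense_of_ae (μ := volume) ?_ x)
    filter_upwards [hΦ.ae_isMaxOn_penalizedAverage_zero hVc hWc hV hW hA hG hGBG hδ] with y hy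
    exact sub_le_iff_le_add.mp ((hy hh).trans_eq (penalizedAverage_zero Φ G δ y))
  refine ge_of_tendsto (((tendsto_barrier_nhds_zero _).mono_left
    (nhdsWithin_le_nhds (s := Ioi 0))).const_add _) ?_
  have hnear : ∀ᶠ δ in 𝓝 (0 : ℝ), h ∈ barrierDomain G δ :=
    (by fun_prop : Continuous fun δ => δ * (G *ᵥ h ⬝ᵥ h)).continuousAt.eventually_lt
      continuousAt_const (by simp)
  filter_upwards [self_mem_nhdsWithin, nhdsWithin_le_nhds hnear] with δ hδ hh
  exact hbarrier δ hδ hh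

theorem convexOn_half_mulVec_dotProduct_self_sub (hΦ : IsBrenierPotential V W Φ)
    [IsFiniteMeasure (gibbsMeasure V)]
    (hV : ConvexOn ℝ univ fun x : Fin n → ℝ => (2 : ℝ)⁻¹ * (A *ᵥ x ⬝ᵥ x) - V x)
    (hW : ConvexOn ℝ univ fun x : Fin n → ℝ => W x - (2 : ℝ)⁻¹ * (B *ᵥ x ⬝ᵥ x))
    (hA : A.PosDef) (hG : G.PosDef) (hGBG : G * B * G = A) :
    ConvexOn ℝ univ fun x => (2 : ℝ)⁻¹ * (G *ᵥ x ⬝ᵥ x) - Φ x := by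
  have hVc : Continuous V := by
    simpa using ((by fun_prop : Continuous fun x : Fin n → ℝ => (2 : ℝ)⁻¹ * (A *ᵥ x ⬝ᵥ x))).fun_sub
      hV.locallyLipschitz.continuous
  have hWc : Continuous W := by
    simpa using hW.locallyLipschitz.continuous.fun_add
      (by fun_prop : Continuous fun x : Fin n → ℝ => (2 : ℝ)⁻¹ * (B *ᵥ x ⬝ᵥ x))
  have hΦc := hΦ.differentiable.continuous
  refine convexOn_univ_of_le_symmAverage (by fun_prop) fun h x => ?_
  have hle := hΦ.symmAverage_le_add hVc hWc hV hW hA hG hGBG h x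
  have hGeq := symmAverage_mulVec_dotProduct_self G h x
  simp only [symmAverage, smul_eq_mul] at hle hGeq ⊢
  linarith

end IsBrenierPotential

end Contraction

section SquareRoot

variable {ι : Type*} [Fintype ι] {B R S : Matrix ι ι ℝ}

lemma posDef_mul_mul_self (hR : R.PosDef) (hS : S.PosDef) : (R * S * R).PosDef := by
  classical
  have hconj := hS.conjTranspose_mul_mul_same (mulVec_injective_of_isUnit hR.isUnit)
  rwa [hR.isHermitian.eq] at hconj

lemma mul_mul_mul_eq_sq_of_sq_eq_inv [DecidableEq ι] (hB : IsUnit B) (hR : IsUnit R)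
    (hS : S * S = (R * B * R)⁻¹) : (R * S * R) * B * (R * S * R) = R * R := by
  have hunit : IsUnit (R * B * R).det := (isUnit_iff_isUnit_det _).mp ((hR.mul hB).mul hR)
  have hone : S * (S * (R * B * R)) = 1 := by rw [← mul_assoc, hS, nonsing_inv_mul _ hunit]
  calc (R * S * R) * B * (R * S * R) = R * (S * (R * B * R) * S) * R := by simp only [mul_assoc]
    _ = R * R := by rw [mul_eq_one_comm.mp hone, mul_one]

end SquareRoot

/-- An anisotropic extension of Caffarelli's contraction theorem: if
`∇²V ≤ A` and `∇²W ≥ B` (expressed through convexity), then the Brenier map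
`∇Φ` from `e^{-V} dx` to `e^{-W} dx` satisfies
`∇²Φ ≤ A^{1/2} (A^{1/2} B A^{1/2})^{-1/2} A^{1/2}`. -/
theorem general_caffarelli_contraction
    {n : ℕ} (V W : (Fin n → ℝ) → ℝ)
    (A B : Matrix (Fin n) (Fin n) ℝ) (hA : A.PosDef) (hB : B.PosDef)
    (hμ : IsProbabilityMeasure
      (volume.withDensity fun x : Fin n → ℝ => ENNReal.ofReal (Real.exp (-V x))))
    (hν : IsProbabilityMeasure
      (volume.withDensity fun x : Fin n → ℝ => ENNReal.ofReal (Real.exp (-W x))))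
    (hV : ConvexOn ℝ Set.univ fun x : Fin n → ℝ =>
      (2 : ℝ)⁻¹ * (A.mulVec x ⬝ᵥ x) - V x)
    (hW : ConvexOn ℝ Set.univ fun x : Fin n → ℝ =>
      W x - (2 : ℝ)⁻¹ * (B.mulVec x ⬝ᵥ x))
    (Φ : (Fin n → ℝ) → ℝ)
    (hΦconv : ConvexOn ℝ Set.univ Φ) (hΦdiff : Differentiable ℝ Φ)
    (htransport : Measure.map (gradVec Φ)
        (volume.withDensity fun x : Fin n → ℝ => ENNReal.ofReal (Real.exp (-V x))) =
      volume.withDensity fun x : Fin n → ℝ => ENNReal.ofReal (Real.exp (-W x)))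
    (R : Matrix (Fin n) (Fin n) ℝ) (hRpos : R.PosDef) (hRA : R * R = A)
    (S : Matrix (Fin n) (Fin n) ℝ) (hSpos : S.PosDef) (hS : S * S = (R * B * R)⁻¹) :
    ConvexOn ℝ Set.univ fun x : Fin n → ℝ =>
      (2 : ℝ)⁻¹ * ((R * S * R).mulVec x ⬝ᵥ x) - Φ x := by
  subst hRA
  have hΦ : IsBrenierPotential V W Φ := ⟨hΦconv, hΦdiff, htransport⟩
  have : IsProbabilityMeasure (gibbsMeasure V) := hμ
  exact hΦ.convexOn_half_mulVec_dotProduct_self_sub hV hW hA (posDef_mul_mul_self hRpos hSpos)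
    (mul_mul_mul_eq_sq_of_sq_eq_inv hB.isUnit hRpos.isUnit hS)
end
end
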